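/- arXiv:1805.06854 — 3 statements merged into one kernel-verified Lean document; each statement's English description precedes it below -/
import Mathlib

section
/- Let p be a prime, k a field of characteristic p, G = (ℤ/p)^n, and A = k[x_1,…,x_n] the polynomial ring graded by deg(x_i) = −1. Let b_n be the minimum of Σ_i dim_k {}_1H_i(M⊗_A k), where M ranges over the finitely generated, free p-DG A-modules such that {}_sH_•(M⊗_A k) ≠ 0 and dim_k {}_sH_•(M) < ∞ for all 1 ≤ s ≤ p−1. Then Σ_i dim_k H_i(C) ≥ b_n for every non-acyclic perfect chain complex C of k[G]-modules. -/
/-! Statement 1: Theorem 1.4/5.6 (`Σ_i dim_k H_i(C) ≥ b_n`), where `b_n` is the minimum of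
`Σ_i dim_k ₁H_i(M ⊗_A k)` over finitely generated free `p`-DG `A`-modules `M` with
`ₛH(M ⊗_A k) ≠ 0` and `dim_k ₛH(M) < ∞` for all `1 ≤ s ≤ p-1`. -/

/-- The group algebra `k[(ℤ/p)ⁿ]`. -/
abbrev GroupRing (p n : ℕ) (k : Type) [Field k] : Type := AddMonoidAlgebra k (Fin n → ZMod p)

/-- A `ℤ`-graded `N`-complex of modules over the group algebra `k[(ℤ/p)ⁿ]`:
a module with an internal grading and a degree `-1` differential `d` with `d ^ N = 0`. -/
structure KGCx (p n : ℕ) (k : Type) [Field k] (N : ℕ) : Type 1 where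
  X : Type
  [acg : AddCommGroup X]
  [modR : Module (GroupRing p n k) X]
  [modk : Module k X]
  [tower : IsScalarTower k (GroupRing p n k) X]
  d : X →ₗ[GroupRing p n k] X
  gr : ℤ → Submodule (GroupRing p n k) X
  internal : DirectSum.IsInternal gr
  d_deg : ∀ m : ℤ, ∀ x ∈ gr m, d x ∈ gr (m - 1)
  d_pow : d ^ N = 0

attribute [instance] KGCx.acg KGCx.modR KGCx.modk KGCx.tower

namespace KGCx

variable {p n N : ℕ} {k : Type} [Field k] (C : KGCx p n k N)

/-- Perfect: the underlying graded module has a finite homogeneous basis over the group ring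
(i.e. it is a bounded complex of finitely generated free modules). -/
def IsPerfect : Prop :=
  ∃ (ι : Type) (_ : Fintype ι) (deg : ι → ℤ) (b : Module.Basis ι (GroupRing p n k) C.X),
    ∀ a, b a ∈ C.gr (deg a)

/-- Non-acyclic: the (total) homology is nonzero. -/
def NonAcyclic : Prop := ∃ x : C.X, C.d x = 0 ∧ x ∉ LinearMap.range C.d

/-- The differential as a `k`-linear map. -/
noncomputable def dk : C.X →ₗ[k] C.X := C.d.restrictScalars k

/-- The total homology `ker d ⧸ im d` as a `k`-vector space; its dimension is
`Σ_i dim_k H_i(C)`. -/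
noncomputable abbrev TotalHomology : Type :=
  ↥(LinearMap.ker C.dk) ⧸ (LinearMap.range C.dk).comap (LinearMap.ker C.dk).subtype

end KGCx

/-- The polynomial ring `A = k[x_1,…,x_n]` (graded by `deg x_i = -1` via the gradings below). -/
abbrev PolyA (n : ℕ) (k : Type) [Field k] : Type := MvPolynomial (Fin n) k

/-- A `p`-DG module over `A = k[x_1,…,x_n]` with `deg x_i = -1`: a graded `A`-module together
with an `A`-linear differential of degree `-1` satisfying `d ^ p = 0`. -/
structure PDG (p n : ℕ) (k : Type) [Field k] : Type 1 where
  X : Type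
  [acg : AddCommGroup X]
  [modA : Module (PolyA n k) X]
  [modk : Module k X]
  [tower : IsScalarTower k (PolyA n k) X]
  d : X →ₗ[PolyA n k] X
  gr : ℤ → Submodule k X
  internal : DirectSum.IsInternal gr
  x_deg : ∀ (i : Fin n) (m : ℤ), ∀ x ∈ gr m, (MvPolynomial.X i : PolyA n k) • x ∈ gr (m - 1)
  d_deg : ∀ m : ℤ, ∀ x ∈ gr m, d x ∈ gr (m - 1)
  d_pow : d ^ p = 0

attribute [instance] PDG.acg PDG.modA PDG.modk PDG.tower

namespace PDG
variable {p n : ℕ} {k : Type} [Field k] (M : PDG p n k)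

/-- `M` is free as a graded `A`-module: it has a homogeneous `A`-basis. -/
def IsFree : Prop :=
  ∃ (ι : Type) (deg : ι → ℤ) (b : Module.Basis ι (PolyA n k) M.X), ∀ a, b a ∈ M.gr (deg a)

/-- `M` is free and finitely generated as a graded `A`-module. -/
def IsFreeFG : Prop :=
  ∃ (ι : Type) (_ : Fintype ι) (deg : ι → ℤ) (b : Module.Basis ι (PolyA n k) M.X),
    ∀ a, b a ∈ M.gr (deg a)

/-- The submodule `(x_1,…,x_n)·M`, i.e. the kernel of `M → M ⊗_A k`. -/
noncomputable def IM : Submodule (PolyA n k) M.X :=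
  (Ideal.span (Set.range (MvPolynomial.X : Fin n → PolyA n k))) • (⊤ : Submodule (PolyA n k) M.X)

/-- The differential as a `k`-linear map. -/
noncomputable def dk : M.X →ₗ[k] M.X := M.d.restrictScalars k

/-- `(x_1,…,x_n)·M` as a `k`-subspace. -/
noncomputable def IMk : Submodule k M.X := M.IM.restrictScalars k

/-- The total homology `ₛH(M) = ker d^s / im d^{p-s}` as a `k`-vector space. -/
noncomputable abbrev H (s : ℕ) : Type :=
  ↥(LinearMap.ker (M.dk ^ s)) ⧸
    (LinearMap.range (M.dk ^ (p - s))).comap (LinearMap.ker (M.dk ^ s)).subtype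

/-- The total homology `ₛH(M ⊗_A k)` as a `k`-vector space, presented as the subquotient
`ker(d̄^s) / im(d̄^{p-s})` of `M/IM` pulled back to `M`. -/
noncomputable abbrev HBar (s : ℕ) : Type :=
  ↥(Submodule.comap (M.dk ^ s) M.IMk) ⧸
    (LinearMap.range (M.dk ^ (p - s)) ⊔ M.IMk).comap (Submodule.comap (M.dk ^ s) M.IMk).subtype

/-- `ₛH(M ⊗_A k) ≠ 0`. -/
def HBarNonzero (s : ℕ) : Prop :=
  ∃ x : M.X, (M.dk ^ s) x ∈ M.IMk ∧ x ∉ LinearMap.range (M.dk ^ (p - s)) ⊔ M.IMk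

end PDG

/-- The set of values `Σ_i dim_k ₁H_i(M ⊗_A k)` as `M` ranges over the finitely generated free
`p`-DG `A`-modules with `ₛH(M ⊗_A k) ≠ 0` and `dim_k ₛH(M) < ∞` for all `1 ≤ s ≤ p-1`;
`b_n` is its infimum. -/
def BSet (p n : ℕ) (k : Type) [Field k] : Set ℕ :=
  {v : ℕ | ∃ M : PDG p n k, M.IsFreeFG ∧
    (∀ s : ℕ, 1 ≤ s → s ≤ p - 1 → M.HBarNonzero s) ∧
    (∀ s : ℕ, 1 ≤ s → s ≤ p - 1 → FiniteDimensional k (M.H s)) ∧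
    v = Module.finrank k (M.HBar 1)}

section Commutator

variable {R : Type*} [Ring R]

/-- The inner derivation `x ↦ D * x - x * D`, as an endomorphism of the additive group `R`. -/
def innerDer (D : R) : Module.End ℤ R := LinearMap.mulLeft ℤ D - LinearMap.mulRight ℤ D

lemma innerDer_apply (D x : R) : innerDer D x = D * x - x * D := rfl

lemma innerDer_pow_succ_apply (D x : R) (r : ℕ) :
    (innerDer D ^ (r + 1)) x = D * (innerDer D ^ r) x - (innerDer D ^ r) x * D := by
  rw [pow_succ', Module.End.mul_apply, innerDer_apply]

lemma innerDer_pow_prime {p : ℕ} (hp : p.Prime) (hR : (p : R) = 0) {D : R} (hD : D ^ p = 0) :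
    innerDer D ^ p = 0 := by
  have hcomm : Commute (LinearMap.mulLeft ℤ D) (-LinearMap.mulRight ℤ D) :=
    (LinearMap.commute_mulLeft_right D D).neg_right
  obtain ⟨r, hr⟩ := hcomm.exists_add_pow_prime_eq hp
  have hE : (p : Module.End ℤ R) = 0 := by
    ext x
    simp [hR, ← Nat.cast_smul_eq_nsmul R]
  rw [innerDer, sub_eq_add_neg, hr, hE, neg_pow, LinearMap.pow_mulLeft, LinearMap.pow_mulRight, hD]
  simp

lemma innerDer_pow_succ_mul {D θ c : R} (hθ : D * θ - θ * D = c) (hc : Commute D c) (w : R)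
    (m : ℕ) : (innerDer D ^ (m + 1)) (θ * w) =
      θ * (innerDer D ^ (m + 1)) w + (m + 1) • (c * (innerDer D ^ m) w) := by
  have hθ' : D * θ = c + θ * D := by rw [← hθ]; abel
  have key (y : R) : D * (θ * y) - θ * y * D = θ * (D * y - y * D) + c * y := by
    rw [← mul_assoc, hθ']; noncomm_ring
  have key' (y : R) : D * (c * y) - c * y * D = c * (D * y - y * D) := by
    rw [← mul_assoc, hc.eq]; noncomm_ring
  induction m with
  | zero => simp [innerDer_apply, key]
  | succ m ih =>
    rw [innerDer_pow_succ_apply, ih, innerDer_pow_succ_apply D w (m + 1), mul_add, add_mul,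
      add_sub_add_comm, key, mul_smul_comm, smul_mul_assoc, ← smul_sub, key',
      ← innerDer_pow_succ_apply D w m, succ_nsmul _ (m + 1)]
    abel

lemma innerDer_pow_pow {D θ c : R} (hθ : D * θ - θ * D = c) (hc : Commute D c) (m : ℕ) :
    (innerDer D ^ m) (θ ^ m) = m.factorial • c ^ m ∧ (innerDer D ^ (m + 1)) (θ ^ m) = 0 := by
  induction m with
  | zero => simp [innerDer_apply]
  | succ m ih =>
    rw [pow_succ' θ, innerDer_pow_succ_mul hθ hc, innerDer_pow_succ_mul hθ hc, ih.1, ih.2,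
      innerDer_pow_succ_apply, ih.2]
    simp only [mul_zero, sub_zero, zero_mul, smul_zero, add_zero, zero_add, mul_smul_comm,
      Nat.factorial_succ, mul_smul, pow_succ', and_self]

end Commutator

section Filtration

variable {A M : Type*} [CommRing A] [AddCommGroup M] [Module A M]

/-- The endomorphisms lowering the filtration degree by at least `r`. -/
def lowering (F : ℤ → Submodule A M) (r : ℕ) : Submodule A (Module.End A M) where
  carrier := {f | ∀ m, ∀ x ∈ F m, f x ∈ F (m - r)}
  add_mem' hf hg m x hx := add_mem (hf m x hx) (hg m x hx)
  zero_mem' _ _ _ := zero_mem _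
  smul_mem' a _ hf m x hx := Submodule.smul_mem _ a (hf m x hx)

variable {F : ℤ → Submodule A M}

lemma mul_mem_lowering {r t : ℕ} {f g : Module.End A M} (hf : f ∈ lowering F r)
    (hg : g ∈ lowering F t) : f * g ∈ lowering F (r + t) := by
  intro m x hx
  have := hf _ _ (hg m x hx)
  rwa [show m - ((r + t : ℕ) : ℤ) = m - t - r by push_cast; ring]

lemma lowering_anti (hF : Monotone F) {r t : ℕ} (h : r ≤ t) : lowering F t ≤ lowering F r :=
  fun _ hf m x hx ↦ hF (by lia) (hf m x hx)

lemma pow_mem_lowering {f : Module.End A M} (hf : f ∈ lowering F 1) (N : ℕ) :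
    f ^ N ∈ lowering F N := by
  induction N with
  | zero => intro m x hx; simpa using hx
  | succ N ih => exact pow_succ f N ▸ mul_mem_lowering ih hf

lemma pow_mem_lowering_zero {f : Module.End A M} (hf : f ∈ lowering F 0) (N : ℕ) :
    f ^ N ∈ lowering F 0 := by
  induction N with
  | zero => intro m x hx; simpa using hx
  | succ N ih => exact pow_succ f N ▸ mul_mem_lowering ih hf

lemma innerDer_pow_mem_lowering (hF : Monotone F) {D d h : Module.End A M}
    (hD : D ∈ lowering F 0) (hd : d ∈ lowering F 1) (hh : h ∈ lowering F 0) (r : ℕ) :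
    (innerDer D ^ r) h ∈ lowering F 0 ∧
      (innerDer (D + d) ^ r) h - (innerDer D ^ r) h ∈ lowering F 1 := by
  induction r with
  | zero => simpa using hh
  | succ r ih =>
    obtain ⟨h0, h1⟩ := ih
    have h0' : (innerDer (D + d) ^ r) h ∈ lowering F 0 := by
      simpa using add_mem (lowering_anti hF zero_le_one h1) h0
    refine ⟨?_, ?_⟩
    · rw [innerDer_pow_succ_apply]
      exact sub_mem (mul_mem_lowering (r := 0) (t := 0) hD h0)
        (mul_mem_lowering (r := 0) (t := 0) h0 hD)
    · rw [innerDer_pow_succ_apply, innerDer_pow_succ_apply]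
      have : (D + d) * (innerDer (D + d) ^ r) h - (innerDer (D + d) ^ r) h * (D + d) -
          (D * (innerDer D ^ r) h - (innerDer D ^ r) h * D) =
          D * ((innerDer (D + d) ^ r) h - (innerDer D ^ r) h) -
          ((innerDer (D + d) ^ r) h - (innerDer D ^ r) h) * D +
          (d * (innerDer (D + d) ^ r) h - (innerDer (D + d) ^ r) h * d) := by noncomm_ring
      rw [this]
      exact add_mem
        (sub_mem (mul_mem_lowering (r := 0) (t := 1) hD h1)
          (mul_mem_lowering (r := 1) (t := 0) h1 hD))
        (sub_mem (mul_mem_lowering (r := 1) (t := 0) hd h0')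
          (mul_mem_lowering (r := 0) (t := 1) h0' hd))

lemma innerDer_pow_apply_mem_range (D h : Module.End A M) (r : ℕ) :
    ∀ s q : ℕ, s + q = r + 1 → ∀ x, (D ^ s) x = 0 →
      ((innerDer D ^ r) h) x ∈ LinearMap.range (D ^ q) := by
  induction r with
  | zero =>
    intro s q hsq x hx
    obtain rfl | rfl : s = 0 ∨ q = 0 := by lia
    · simp_all
    · simp
  | succ r ih =>
    intro s q hsq x hx
    rw [innerDer_pow_succ_apply, LinearMap.sub_apply]
    refine sub_mem ?_ ?_
    · obtain _ | q := q
      · simp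
      · obtain ⟨y, hy⟩ := ih s q (by lia) x hx
        exact ⟨y, by rw [Module.End.mul_apply, ← hy, pow_succ', Module.End.mul_apply]⟩
    · obtain _ | s := s
      · simp_all
      · exact ih s q (by lia) (D x) (by rw [← Module.End.mul_apply, ← pow_succ, hx])

theorem exists_pow_apply_mem_range {p : ℕ} (hp : p.Prime) (hA : (p : A) = 0)
    (hF : Monotone F) {lo hi : ℤ} (hlo : F lo = ⊥) (hhi : F hi = ⊤)
    {D d θ c : Module.End A M} (hpow : (D + d) ^ p = 0) (hθ : D * θ - θ * D = c)
    (hDc : Commute D c) (hdc : Commute d c) (hD : D ∈ lowering F 0) (hd : d ∈ lowering F 1)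
    (hθF : θ ∈ lowering F 0) {s q : ℕ} (hsq : s + q = p) :
    ∃ N : ℕ, ∀ x, ((D + d) ^ s) x = 0 →
      (((p - 1).factorial • c ^ (p - 1)) ^ N) x ∈ LinearMap.range ((D + d) ^ q) := by
  set u := (innerDer (D + d) ^ (p - 1)) (θ ^ (p - 1)) with hu
  set e := (p - 1).factorial • c ^ (p - 1) with he
  have hp1 : p - 1 + 1 = p := Nat.sub_add_cancel hp.one_le
  have hR : (p : Module.End A M) = 0 := by
    ext x
    simp [← Nat.cast_smul_eq_nsmul A, hA]
  have huD : Commute (D + d) u := by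
    have := innerDer_pow_succ_apply (D + d) (θ ^ (p - 1)) (p - 1)
    rw [hp1, innerDer_pow_prime hp hR hpow] at this
    exact (sub_eq_zero.mp this.symm)
  have heD : Commute (D + d) e := ((hDc.add_left hdc).pow_right _).smul_right _
  have hv : u - e ∈ lowering F 1 := by
    have := (innerDer_pow_mem_lowering hF hD hd (pow_mem_lowering_zero hθF (p - 1)) (p - 1)).2
    rwa [(innerDer_pow_pow hθ hDc (p - 1)).1] at this
  have hvD : Commute (D + d) (u - e) := huD.sub_right heD
  have hvN : (u - e) ^ (hi - lo).toNat = 0 := by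
    ext x
    have h1 := pow_mem_lowering hv (hi - lo).toNat (max hi lo) x
      (hF (le_max_left hi lo) (hhi ▸ Submodule.mem_top))
    have h2 : max hi lo - ((hi - lo).toNat : ℤ) = lo := by lia
    rw [h2, hlo] at h1
    simpa using h1
  have hmap {f : Module.End A M} (hf : Commute (D + d) f) {q : ℕ} {y : M}
      (hy : y ∈ LinearMap.range ((D + d) ^ q)) : f y ∈ LinearMap.range ((D + d) ^ q) := by
    obtain ⟨z, rfl⟩ := hy
    exact ⟨f z, by rw [← Module.End.mul_apply, (hf.pow_left q).eq, Module.End.mul_apply]⟩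
  have hker {f : Module.End A M} (hf : Commute (D + d) f) {y : M}
      (hy : ((D + d) ^ s) y = 0) : ((D + d) ^ s) (f y) = 0 := by
    rw [← Module.End.mul_apply, (hf.pow_left s).eq, Module.End.mul_apply, hy, map_zero]
  have main (N : ℕ) (x : M) (hx : ((D + d) ^ s) x = 0) :
      (e ^ N) x - ((-(u - e)) ^ N) x ∈ LinearMap.range ((D + d) ^ q) := by
    induction N with
    | zero => simp
    | succ N ih =>
      have h1 : u ((e ^ N) x) ∈ LinearMap.range ((D + d) ^ q) :=
        innerDer_pow_apply_mem_range _ _ _ s q (by lia) _ (hker (heD.pow_right N) hx)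
      have h2 := hmap hvD ih
      convert sub_mem h1 h2 using 1
      simp only [pow_succ', Module.End.mul_apply, LinearMap.sub_apply, LinearMap.neg_apply,
        map_sub]
      abel
  refine ⟨(hi - lo).toNat, fun x hx ↦ ?_⟩
  have := main (hi - lo).toNat x hx
  rwa [neg_pow, hvN, mul_zero, LinearMap.zero_apply, sub_zero] at this

end Filtration

section FiniteDimension

variable {n : ℕ} {k : Type*} [Field k] {M : Type*} [AddCommGroup M]
  [Module (MvPolynomial (Fin n) k) M] [Module k M] [IsScalarTower k (MvPolynomial (Fin n) k) M]

lemma finite_quotient_of_X_pow_mem {J : Ideal (MvPolynomial (Fin n) k)}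
    (hJ : ∀ j, ∃ N : ℕ, (MvPolynomial.X j : MvPolynomial (Fin n) k) ^ N ∈ J) :
    Module.Finite k (MvPolynomial (Fin n) k ⧸ J) := by
  set s : Set (MvPolynomial (Fin n) k ⧸ J) :=
    Ideal.Quotient.mkₐ k J '' Set.range MvPolynomial.X with hs
  have htop : Algebra.adjoin k s = ⊤ := by
    rw [hs, ← AlgHom.map_adjoin, MvPolynomial.adjoin_range_X, Algebra.map_top,
      AlgHom.range_eq_top]
    exact Ideal.Quotient.mkₐ_surjective k J
  have hfg := fg_adjoin_of_finite (R := k) ((Set.finite_range _).image _ : s.Finite) (by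
    rintro _ ⟨_, ⟨j, rfl⟩, rfl⟩
    obtain ⟨N, hN⟩ := hJ j
    refine IsIntegral.of_pow (n := N + 1) N.succ_pos ?_
    rw [← map_pow, Ideal.Quotient.mkₐ_eq_mk, Ideal.Quotient.eq_zero_iff_mem.mpr
      (pow_succ (MvPolynomial.X j : MvPolynomial (Fin n) k) N ▸ J.mul_mem_right _ hN)]
    exact isIntegral_zero)
  rw [htop] at hfg
  exact ⟨hfg⟩

lemma finite_of_X_pow_smul_eq_zero [Module.Finite (MvPolynomial (Fin n) k) M]
    (h : ∀ j, ∃ N : ℕ, ∀ x : M, (MvPolynomial.X j : MvPolynomial (Fin n) k) ^ N • x = 0) :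
    Module.Finite k M := by
  set J := Module.annihilator (MvPolynomial (Fin n) k) M
  have hJ : Module.IsTorsionBySet (MvPolynomial (Fin n) k) M J :=
    fun x a ↦ Module.mem_annihilator.mp a.2 x
  let _ : Module (MvPolynomial (Fin n) k ⧸ J) M := hJ.module
  have : IsScalarTower (MvPolynomial (Fin n) k) (MvPolynomial (Fin n) k ⧸ J) M :=
    hJ.isScalarTower
  have : IsScalarTower k (MvPolynomial (Fin n) k ⧸ J) M := hJ.isScalarTower
  have : Module.Finite (MvPolynomial (Fin n) k ⧸ J) M :=
    Module.Finite.of_restrictScalars_finite (MvPolynomial (Fin n) k) _ M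
  have : Module.Finite k (MvPolynomial (Fin n) k ⧸ J) := finite_quotient_of_X_pow_mem fun j ↦
    (h j).imp fun _ hN ↦ Module.mem_annihilator.mpr hN
  exact Module.Finite.trans (MvPolynomial (Fin n) k ⧸ J) M

lemma finite_subquotient_of_X_pow_smul_mem [Module.Finite (MvPolynomial (Fin n) k) M]
    (K B : Submodule (MvPolynomial (Fin n) k) M)
    (h : ∀ j, ∃ N : ℕ, ∀ x ∈ K, (MvPolynomial.X j : MvPolynomial (Fin n) k) ^ N • x ∈ B) :
    Module.Finite k (↥(K.restrictScalars k) ⧸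
      (B.restrictScalars k).comap (K.restrictScalars k).subtype) := by
  have : Module.Finite k (↥K ⧸ B.comap K.subtype) := by
    refine finite_of_X_pow_smul_eq_zero fun j ↦ (h j).imp fun N hN x ↦ ?_
    obtain ⟨y, rfl⟩ := Submodule.Quotient.mk_surjective _ x
    rw [← Submodule.Quotient.mk_smul, Submodule.Quotient.mk_eq_zero]
    exact hN y y.2
  exact Module.Finite.equiv (Submodule.Quotient.restrictScalarsEquiv k (B.comap K.subtype)).symm

end FiniteDimension

section Subquotient

variable {k V W : Type*} [Field k] [AddCommGroup V] [Module k V] [AddCommGroup W] [Module k W]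

lemma finrank_subquotient_le (f : V →ₗ[k] W) {K B : Submodule k V} {K' B' : Submodule k W}
    [Module.Finite k (K' ⧸ B'.comap K'.subtype)] (hK : ∀ x ∈ K, f x ∈ K')
    (hB : ∀ x ∈ K, x ∈ B ↔ f x ∈ B') :
    Module.finrank k (K ⧸ B.comap K.subtype) ≤ Module.finrank k (K' ⧸ B'.comap K'.subtype) := by
  refine LinearMap.finrank_le_finrank_of_injective
    (f := (B.comap K.subtype).mapQ (B'.comap K'.subtype) (f.restrict hK)
      fun x hx ↦ (hB x x.2).mp hx) ?_
  rw [injective_iff_map_eq_zero]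
  intro x hx
  obtain ⟨y, rfl⟩ := Submodule.Quotient.mk_surjective _ x
  have hy : f y ∈ B' := (Submodule.Quotient.mk_eq_zero (B'.comap K'.subtype)).mp hx
  exact (Submodule.Quotient.mk_eq_zero _).mpr ((hB y y.2).mpr hy)

lemma Module.Basis.isInternal_span {ι κ : Type*} [DecidableEq κ] (b : Module.Basis ι k V)
    (deg : ι → κ) :
    DirectSum.IsInternal fun m ↦ Submodule.span k (b '' (deg ⁻¹' {m})) := by
  rw [DirectSum.isInternal_submodule_iff_iSupIndep_and_iSup_eq_top]
  constructor
  · rw [iSupIndep_def]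
    intro m
    have h : ⨆ j, ⨆ (_ : j ≠ m), Submodule.span k (b '' (deg ⁻¹' {j})) ≤
        Submodule.span k (b '' (deg ⁻¹' {m}ᶜ)) :=
      iSup₂_le fun j hj ↦ Submodule.span_mono (Set.image_mono fun i hi ↦ by simp_all)
    exact (b.linearIndependent.disjoint_span_image
      (Disjoint.preimage deg disjoint_compl_right)).mono_right h
  · rw [← Submodule.span_iUnion, ← Set.image_iUnion, ← Set.preimage_iUnion,
      Set.iUnion_of_singleton, Set.preimage_univ, Set.image_univ, b.span_eq]

end Subquotient

open scoped TensorProduct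

lemma sum_pow_prime_eq_zero {R ι : Type*} [Ring R] {p : ℕ} (hp : p.Prime) (hR : (p : R) = 0)
    (s : Finset ι) (f : ι → R) (hc : ∀ i j, Commute (f i) (f j)) (hf : ∀ i, f i ^ p = 0) :
    (∑ i ∈ s, f i) ^ p = 0 := by
  classical
  induction s using Finset.induction_on with
  | empty => simp [hp.ne_zero]
  | insert a s ha ih =>
    obtain ⟨r, hr⟩ := (Commute.sum_right s f (f a) fun j _ ↦ hc a j).exists_add_pow_prime_eq hp
    rw [Finset.sum_insert ha, hr, hR, ih, hf]
    simp

/-- A graded `p`-complex `V` with commuting degree zero operators `y i` of `p`-th power zero,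
together with degree zero operators `θ j` whose commutator with `y i` is a unit `g j`
commuting with everything but the `θ`'s if `i = j`, and zero otherwise. -/
structure TwistData (p n : ℕ) (k V : Type) [Field k] [AddCommGroup V] [Module k V] where
  gr : ℤ → Submodule k V
  internal : DirectSum.IsInternal gr
  d : Module.End k V
  y : Fin n → Module.End k V
  g : Fin n → (Module.End k V)ˣ
  θ : Fin n → Module.End k V
  d_deg : ∀ m, ∀ v ∈ gr m, d v ∈ gr (m - 1)
  y_deg : ∀ i m, ∀ v ∈ gr m, y i v ∈ gr m
  θ_deg : ∀ i m, ∀ v ∈ gr m, θ i v ∈ gr m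
  d_pow : d ^ p = 0
  y_pow : ∀ i, y i ^ p = 0
  commute_d_y : ∀ i, Commute d (y i)
  commute_y_y : ∀ i j, Commute (y i) (y j)
  commute_d_g : ∀ i, Commute d (g i)
  commute_y_g : ∀ i j, Commute (y i) (g j)
  y_θ : ∀ i j, y i * θ j - θ j * y i = if i = j then -(g j : Module.End k V) else 0

namespace TwistData

variable {p n : ℕ} {k V : Type} [Field k] [AddCommGroup V] [Module k V] (T : TwistData p n k V)

/-- Extension of scalars of `k`-linear endomorphisms to the polynomial ring. -/
noncomputable abbrev ext : Module.End k V →ₐ[k] Module.End (PolyA n k) (PolyA n k ⊗[k] V) :=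
  Module.End.baseChangeHom k (PolyA n k) V

lemma ext_tmul (f : Module.End k V) (a : PolyA n k) (v : V) : ext f (a ⊗ₜ[k] v) = a ⊗ₜ f v := rfl

/-- The twisting term `∑ x_i y_i`. -/
noncomputable def twist : Module.End (PolyA n k) (PolyA n k ⊗[k] V) :=
  ∑ i, (MvPolynomial.X i : PolyA n k) • ext (T.y i)

/-- The twisted differential `∑ x_i y_i + d`. -/
noncomputable def diff : Module.End (PolyA n k) (PolyA n k ⊗[k] V) :=
  T.twist + ext T.d

lemma commute_twist_ext {f : Module.End k V} (hf : ∀ i, Commute (T.y i) f) :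
    Commute T.twist (ext f) :=
  Commute.sum_left _ _ _ fun i _ ↦ ((hf i).map (ext (n := n))).smul_left _

lemma natCast_end_eq_zero [CharP k p] :
    (p : Module.End (PolyA n k) (PolyA n k ⊗[k] V)) = 0 := by
  rw [← map_natCast (algebraMap k _), CharP.cast_eq_zero, map_zero]

lemma diff_pow [hp : Fact p.Prime] [CharP k p] : T.diff ^ p = 0 := by
  obtain ⟨r, hr⟩ := (T.commute_twist_ext fun i ↦ (T.commute_d_y i).symm).exists_add_pow_prime_eq
    hp.out
  have htw : T.twist ^ p = 0 :=
    sum_pow_prime_eq_zero hp.out natCast_end_eq_zero _ _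
      (fun i j ↦ (((T.commute_y_y i j).map (ext (n := n))).smul_left _).smul_right _)
      fun i ↦ by rw [smul_pow, ← map_pow, T.y_pow, map_zero, smul_zero]
  rw [diff, hr, htw, ← map_pow, T.d_pow, natCast_end_eq_zero]
  simp

/-- The grading of the twisted module, with `x_i` in degree `-1`. -/
noncomputable def grading (m : ℤ) : Submodule k (PolyA n k ⊗[k] V) :=
  Submodule.span k {t | ∃ (α : Fin n →₀ ℕ) (i : ℤ), ∃ v ∈ T.gr i,
    i - α.degree = m ∧ t = MvPolynomial.monomial α 1 ⊗ₜ v}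

lemma monomial_tmul_mem_grading {α : Fin n →₀ ℕ} {i m : ℤ} {v : V} (hv : v ∈ T.gr i)
    (h : i - α.degree = m) :
    (MvPolynomial.monomial α 1 : PolyA n k) ⊗ₜ v ∈ T.grading m :=
  Submodule.subset_span ⟨α, i, v, hv, h, rfl⟩

lemma X_smul_mem_grading (i : Fin n) (m : ℤ) (t : PolyA n k ⊗[k] V) (ht : t ∈ T.grading m) :
    (MvPolynomial.X i : PolyA n k) • t ∈ T.grading (m - 1) := by
  induction ht using Submodule.span_induction with
  | mem t ht =>
    obtain ⟨α, j, v, hv, h, rfl⟩ := ht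
    rw [TensorProduct.smul_tmul', smul_eq_mul, MvPolynomial.X, MvPolynomial.monomial_mul, one_mul]
    refine T.monomial_tmul_mem_grading hv ?_
    rw [map_add, Finsupp.degree_single]
    push_cast
    lia
  | zero => simp
  | add s t _ _ hs ht => rw [smul_add]; exact add_mem hs ht
  | smul a t _ ht => rw [smul_comm]; exact Submodule.smul_mem _ _ ht

lemma ext_mem_grading {f : Module.End k V} {r : ℤ}
    (hf : ∀ m, ∀ v ∈ T.gr m, f v ∈ T.gr (m - r)) {m : ℤ}
    {t : PolyA n k ⊗[k] V} (ht : t ∈ T.grading m) : ext f t ∈ T.grading (m - r) := by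
  induction ht using Submodule.span_induction with
  | mem t ht =>
    obtain ⟨α, j, v, hv, h, rfl⟩ := ht
    exact T.monomial_tmul_mem_grading (hf _ _ hv) (by lia)
  | zero => simp
  | add s t _ _ hs ht => rw [map_add]; exact add_mem hs ht
  | smul a t _ ht => rw [LinearMap.map_smul_of_tower]; exact Submodule.smul_mem _ _ ht

lemma diff_mem_grading (m : ℤ) (t : PolyA n k ⊗[k] V) (ht : t ∈ T.grading m) :
    T.diff t ∈ T.grading (m - 1) := by
  rw [diff, twist, LinearMap.add_apply, LinearMap.sum_apply]
  refine add_mem (sum_mem fun i _ ↦ T.X_smul_mem_grading i m _ ?_) (T.ext_mem_grading T.d_deg ht)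
  simpa using T.ext_mem_grading (r := 0) (by simpa using T.y_deg i) ht

/-- A homogeneous basis of `V`. -/
noncomputable def basis :
    Module.Basis (Σ i, Module.Basis.ofVectorSpaceIndex k (T.gr i)) k V :=
  T.internal.collectedBasis fun i ↦ Module.Basis.ofVectorSpace k (T.gr i)

lemma basis_mem (a : Σ i, Module.Basis.ofVectorSpaceIndex k (T.gr i)) :
    T.basis a ∈ T.gr a.1 :=
  T.internal.collectedBasis_mem _ a

lemma gr_le_span (i : ℤ) : T.gr i ≤ Submodule.span k (Set.range fun q ↦ T.basis ⟨i, q⟩) := by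
  have h : (fun q ↦ T.basis ⟨i, q⟩) =
      (T.gr i).subtype ∘ Module.Basis.ofVectorSpace k (T.gr i) := by
    ext q
    simp [basis]
  rw [h, Set.range_comp, Submodule.span_image, Module.Basis.span_eq, Submodule.map_top,
    Submodule.range_subtype]

lemma isInternal_grading : DirectSum.IsInternal T.grading := by
  set β := (MvPolynomial.basisMonomials (Fin n) k).smulTower
    (Algebra.TensorProduct.basis (PolyA n k) T.basis) with hβ
  have hβ_apply (α a) : β (α, a) = MvPolynomial.monomial α 1 ⊗ₜ T.basis a := by
    rw [hβ, Module.Basis.smulTower_apply, MvPolynomial.coe_basisMonomials,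
      Algebra.TensorProduct.basis_apply, TensorProduct.smul_tmul', smul_eq_mul, mul_one]
  have hgr : T.grading = fun m ↦
      Submodule.span k (β '' ((fun c ↦ c.2.1 - (c.1.degree : ℤ)) ⁻¹' {m})) := by
    funext m
    refine le_antisymm (Submodule.span_le.mpr ?_) (Submodule.span_le.mpr ?_)
    · rintro _ ⟨α, i, v, hv, h, rfl⟩
      have hle : T.gr i ≤ (Submodule.span k
          (β '' ((fun c ↦ c.2.1 - (c.1.degree : ℤ)) ⁻¹' {m}))).comap
            (TensorProduct.mk k (PolyA n k) V (MvPolynomial.monomial α 1)) := by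
        refine (T.gr_le_span i).trans (Submodule.span_le.mpr ?_)
        rintro _ ⟨q, rfl⟩
        exact Submodule.subset_span ⟨(α, ⟨i, q⟩), h, hβ_apply _ _⟩
      exact hle hv
    · rintro _ ⟨⟨α, a⟩, h, rfl⟩
      rw [hβ_apply]
      exact T.monomial_tmul_mem_grading (T.basis_mem a) h
  rw [hgr]
  exact β.isInternal_span _

/-- The twisted `p`-DG module. -/
noncomputable def toPDG [Fact p.Prime] [CharP k p] : PDG p n k where
  X := PolyA n k ⊗[k] V
  d := T.diff
  gr := T.grading
  internal := T.isInternal_grading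
  x_deg := T.X_smul_mem_grading
  d_deg := T.diff_mem_grading
  d_pow := T.diff_pow

lemma toPDG_isFreeFG [Fact p.Prime] [CharP k p] [Module.Finite k V] : T.toPDG.IsFreeFG := by
  have := Module.Finite.finite_basis T.basis
  refine ⟨_, Fintype.ofFinite _, Sigma.fst, Algebra.TensorProduct.basis (PolyA n k) T.basis,
    fun a ↦ ?_⟩
  have h := T.monomial_tmul_mem_grading (α := 0) (T.basis_mem a) (m := a.1) (by simp)
  exact (Algebra.TensorProduct.basis_apply (A := PolyA n k) T.basis a).symm ▸ h

end TwistData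

lemma sum_smul_mul_sub_mul_sum_smul {A R ι : Type*} [CommRing A] [Ring R] [Algebra A R]
    (s : Finset ι) (a : ι → A) (f : ι → R) (θ : R) :
    (∑ i ∈ s, a i • f i) * θ - θ * ∑ i ∈ s, a i • f i =
      ∑ i ∈ s, a i • (f i * θ - θ * f i) := by
  simp only [Finset.sum_mul, Finset.mul_sum, smul_mul_assoc, mul_smul_comm, smul_sub,
    Finset.sum_sub_distrib]

lemma nsmul_smul_pow_pow {A R : Type*} [CommRing A] [Ring R] [Algebra A R] (a : A) (e : R)
    (m r N : ℕ) : (m • (a • e) ^ r) ^ N = a ^ (r * N) • (m • e ^ r) ^ N := by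
  rw [smul_pow a, smul_comm, smul_pow, pow_mul]

namespace PDG

variable {p n : ℕ} {k : Type} [Field k] (M : PDG p n k)

lemma dk_pow (s : ℕ) : M.dk ^ s = (M.d ^ s).restrictScalars k := by
  ext x
  rw [LinearMap.restrictScalars_apply, Module.End.pow_apply, Module.End.pow_apply]
  rfl

end PDG

namespace TwistData

variable {p n : ℕ} {k V : Type} [Field k] [AddCommGroup V] [Module k V] (T : TwistData p n k V)

/-- The filtration of the twisted module by the degree in `V`. -/
noncomputable def filtration (m : ℤ) : Submodule (PolyA n k) (PolyA n k ⊗[k] V) :=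
  Submodule.span (PolyA n k) {t | ∃ i ≤ m, ∃ v ∈ T.gr i, t = 1 ⊗ₜ v}

lemma filtration_mono : Monotone T.filtration := fun _ _ h ↦
  Submodule.span_mono fun _ ⟨i, hi, hv⟩ ↦ ⟨i, hi.trans h, hv⟩

lemma ext_mem_lowering {f : Module.End k V} {r : ℕ}
    (hf : ∀ m, ∀ v ∈ T.gr m, f v ∈ T.gr (m - r)) : ext f ∈ lowering T.filtration r := by
  intro m t ht
  induction ht using Submodule.span_induction with
  | mem t ht =>
    obtain ⟨i, hi, v, hv, rfl⟩ := ht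
    exact Submodule.subset_span ⟨i - r, by lia, f v, hf _ _ hv, rfl⟩
  | zero => simp
  | add s t _ _ hs ht => rw [map_add]; exact add_mem hs ht
  | smul a t _ ht => rw [map_smul]; exact Submodule.smul_mem _ _ ht

lemma twist_mem_lowering : T.twist ∈ lowering T.filtration 0 :=
  sum_mem fun i _ ↦ Submodule.smul_mem _ _ (T.ext_mem_lowering (by simpa using T.y_deg i))

lemma exists_filtration_bounds [Module.Finite k V] :
    ∃ lo hi : ℤ, T.filtration lo = ⊥ ∧ T.filtration hi = ⊤ := by
  have hfin : {i | T.gr i ≠ ⊥}.Finite :=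
    WellFoundedGT.finite_ne_bot_of_iSupIndep T.internal.submodule_iSupIndep
  obtain ⟨lo, hlo⟩ := hfin.bddBelow
  obtain ⟨hi, hhi⟩ := hfin.bddAbove
  refine ⟨lo - 1, hi, ?_, ?_⟩
  · refine Submodule.span_eq_bot.mpr ?_
    rintro _ ⟨i, hi, v, hv, rfl⟩
    have : T.gr i = ⊥ := by
      by_contra h
      have := hlo h
      lia
    rw [this, Submodule.mem_bot] at hv
    rw [hv, TensorProduct.tmul_zero]
  · rw [eq_top_iff, ← (Algebra.TensorProduct.basis (PolyA n k) T.basis).span_eq, Submodule.span_le]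
    rintro _ ⟨a, rfl⟩
    rw [Algebra.TensorProduct.basis_apply]
    refine Submodule.subset_span ⟨a.1, hhi fun h ↦ ?_, _, T.basis_mem a, rfl⟩
    exact T.basis.ne_zero a ((Submodule.mem_bot k).mp (h ▸ T.basis_mem a))

lemma twist_mul_ext_θ_sub (j : Fin n) :
    T.twist * ext (T.θ j) - ext (T.θ j) * T.twist =
      (MvPolynomial.X j : PolyA n k) • ext (-(T.g j : Module.End k V)) := by
  have key (i : Fin n) : ext (n := n) (T.y i) * ext (T.θ j) - ext (T.θ j) * ext (T.y i) =
      ext (if i = j then -(T.g j : Module.End k V) else 0) := by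
    rw [← T.y_θ, map_sub, map_mul, map_mul]
  refine (sum_smul_mul_sub_mul_sum_smul (A := PolyA n k)
    (R := Module.End (PolyA n k) (PolyA n k ⊗[k] V)) _ _ _ _).trans ?_
  rw [Finset.sum_congr rfl fun i _ ↦ congrArg _ (key i), Finset.sum_eq_single j, if_pos rfl]
  · intro i _ hij
    rw [if_neg hij, map_zero, smul_zero]
  · simp

lemma exists_X_pow_smul_mem_range [hp : Fact p.Prime] [CharP k p] [Module.Finite k V]
    (j : Fin n) {s q : ℕ} (hsq : s + q = p) :
    ∃ N : ℕ, ∀ x ∈ LinearMap.ker (T.diff ^ s),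
      (MvPolynomial.X j : PolyA n k) ^ N • x ∈ LinearMap.range (T.diff ^ q) := by
  obtain ⟨lo, hi, hlo, hhi⟩ := T.exists_filtration_bounds
  have hg (f : Module.End k V) (hf : Commute f (T.g j)) : Commute f (-(T.g j : Module.End k V)) :=
    hf.neg_right
  have hc {f : Module.End (PolyA n k) (PolyA n k ⊗[k] V)}
      (hf : Commute f (ext (-(T.g j : Module.End k V)))) :
      Commute f ((MvPolynomial.X j : PolyA n k) • ext (-(T.g j : Module.End k V))) :=
    hf.smul_right _
  have hA : (p : PolyA n k) = 0 := by
    rw [← map_natCast (algebraMap k _), CharP.cast_eq_zero, map_zero]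
  obtain ⟨N, hN⟩ := exists_pow_apply_mem_range hp.out hA T.filtration_mono hlo hhi T.diff_pow
    (T.twist_mul_ext_θ_sub j)
    (hc (T.commute_twist_ext fun i ↦ hg _ (T.commute_y_g i j)))
    (hc ((hg _ (T.commute_d_g j)).map ext)) T.twist_mem_lowering
    (T.ext_mem_lowering T.d_deg) (T.ext_mem_lowering (by simpa using T.θ_deg j)) hsq
  have hfac : ((p - 1).factorial : k) ≠ 0 := by
    rw [Ne, CharP.cast_eq_zero_iff k p, hp.out.dvd_factorial]
    have := hp.out.one_lt
    lia
  set γ : Module.End k V :=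
    (algebraMap k (Module.End k V) ((p - 1).factorial : k) * (-(T.g j : Module.End k V)) ^ (p - 1))
      ^ N with hγ
  have hγu : IsUnit γ :=
    (((isUnit_iff_ne_zero.mpr hfac).map _).mul ((T.g j).isUnit.neg.pow _)).pow _
  have hγc (f : Module.End k V) (hf : Commute f (T.g j)) : Commute f γ :=
    ((Algebra.commute_algebraMap_right _ f).mul_right ((hg f hf).pow_right _)).pow_right _
  obtain ⟨w, hw⟩ := hγu
  have hDw : Commute T.diff (ext ((w⁻¹ : (Module.End k V)ˣ) : Module.End k V)) :=
    Commute.add_left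
      (T.commute_twist_ext fun i ↦ (hw ▸ hγc _ (T.commute_y_g i j) : Commute _ _).units_inv_right)
      ((hw ▸ hγc _ (T.commute_d_g j) : Commute _ _).units_inv_right.map ext)
  refine ⟨(p - 1) * N, fun x hx ↦ ?_⟩
  obtain ⟨z, hz⟩ := hN x hx
  refine ⟨ext ((w⁻¹ : (Module.End k V)ˣ) : Module.End k V) z, ?_⟩
  have hpow : ((p - 1).factorial • ((MvPolynomial.X j : PolyA n k) •
      ext (n := n) (-(T.g j : Module.End k V))) ^ (p - 1)) ^ N =
      (MvPolynomial.X j : PolyA n k) ^ ((p - 1) * N) • ext (n := n) γ := by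
    rw [hγ, map_pow, map_mul, map_natCast, map_natCast, map_pow, ← nsmul_eq_mul]
    exact nsmul_smul_pow_pow (A := PolyA n k)
      (R := Module.End (PolyA n k) (PolyA n k ⊗[k] V)) _ _ _ _ _
  rw [← Module.End.mul_apply, (hDw.pow_left q).eq, Module.End.mul_apply]
  rw [show (T.diff ^ q) z = _ from hz, hpow, LinearMap.smul_apply, map_smul,
    ← Module.End.mul_apply, ← map_mul, ← hw,
    Units.inv_mul, map_one, Module.End.one_apply]

lemma finite_toPDG_H [Fact p.Prime] [CharP k p] [Module.Finite k V] {s : ℕ} (hs : s ≤ p) :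
    Module.Finite k (T.toPDG.H s) := by
  have : Module.Finite (PolyA n k) T.toPDG.X :=
    inferInstanceAs (Module.Finite (PolyA n k) (PolyA n k ⊗[k] V))
  unfold PDG.H
  rw [PDG.dk_pow, PDG.dk_pow]
  exact finite_subquotient_of_X_pow_smul_mem (LinearMap.ker (T.toPDG.d ^ s))
    (LinearMap.range (T.toPDG.d ^ (p - s)))
    fun j ↦ T.exists_X_pow_smul_mem_range j (Nat.add_sub_of_le hs)

/-- Reduction modulo `(x_1,…,x_n)`. -/
noncomputable def reduce : PolyA n k ⊗[k] V →ₗ[k] V :=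
  TensorProduct.lid k V ∘ₗ LinearMap.rTensor V
    (MvPolynomial.aeval (0 : Fin n → k) : PolyA n k →ₐ[k] k).toLinearMap

lemma reduce_tmul (a : PolyA n k) (v : V) :
    reduce (a ⊗ₜ[k] v) = MvPolynomial.aeval (0 : Fin n → k) a • v := by
  simp [reduce]

lemma reduce_smul (a : PolyA n k) (t : PolyA n k ⊗[k] V) :
    reduce (a • t) = MvPolynomial.aeval (0 : Fin n → k) a • reduce t := by
  induction t with
  | zero => simp
  | tmul b v => simp [TensorProduct.smul_tmul', reduce_tmul, mul_smul]
  | add s t hs ht => simp [hs, ht]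

lemma reduce_diff (t : PolyA n k ⊗[k] V) : reduce (T.diff t) = T.d (reduce t) := by
  induction t with
  | zero => simp
  | tmul a v =>
    rw [diff, twist, LinearMap.add_apply, map_add, LinearMap.sum_apply, map_sum, ext_tmul]
    simp [reduce_smul, reduce_tmul]
  | add s t hs ht => simp [hs, ht]

lemma reduce_diff_pow (s : ℕ) (t : PolyA n k ⊗[k] V) :
    reduce ((T.diff ^ s) t) = (T.d ^ s) (reduce t) := by
  induction s with
  | zero => rfl
  | succ s ih => rw [pow_succ', Module.End.mul_apply, reduce_diff, ih, pow_succ',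
      Module.End.mul_apply]

lemma sub_algebraMap_aeval_mem (a : PolyA n k) :
    a - algebraMap k _ (MvPolynomial.aeval (0 : Fin n → k) a) ∈
      Ideal.span (Set.range (MvPolynomial.X : Fin n → PolyA n k)) := by
  induction a using MvPolynomial.induction_on with
  | C c => simp [← MvPolynomial.algebraMap_eq]
  | add a b ha hb =>
    rw [map_add, map_add, add_sub_add_comm]
    exact add_mem ha hb
  | mul_X a i _ =>
    simpa using Ideal.mul_mem_left _ a (Ideal.subset_span (Set.mem_range_self i))

lemma mem_IMk_iff [Fact p.Prime] [CharP k p] (t : PolyA n k ⊗[k] V) :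
    (show T.toPDG.X from t) ∈ T.toPDG.IMk ↔ reduce t = 0 := by
  change t ∈ Ideal.span (Set.range (MvPolynomial.X : Fin n → PolyA n k)) •
    (⊤ : Submodule (PolyA n k) (PolyA n k ⊗[k] V)) ↔ _
  constructor
  · intro ht
    induction ht using Submodule.smul_induction_on' with
    | smul a ha t _ =>
      have : Ideal.span (Set.range (MvPolynomial.X : Fin n → PolyA n k)) ≤
          RingHom.ker (MvPolynomial.aeval (0 : Fin n → k)) := by
        rw [Ideal.span_le]
        rintro _ ⟨i, rfl⟩
        simp
      rw [reduce_smul, (this ha : MvPolynomial.aeval (0 : Fin n → k) a = 0), zero_smul]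
    | add s _ t _ hs ht => rw [map_add, hs, ht, add_zero]
  · intro h
    have key : t - 1 ⊗ₜ reduce t ∈ Ideal.span (Set.range (MvPolynomial.X : Fin n → PolyA n k)) •
        (⊤ : Submodule (PolyA n k) (PolyA n k ⊗[k] V)) := by
      clear h
      induction t with
      | zero => simp
      | tmul a v =>
        convert Submodule.smul_mem_smul (sub_algebraMap_aeval_mem a)
          (Submodule.mem_top (x := (1 : PolyA n k) ⊗ₜ[k] v)) using 1
        rw [reduce_tmul, sub_smul, TensorProduct.smul_tmul', smul_eq_mul, mul_one,
          algebraMap_smul, TensorProduct.tmul_smul]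
      | add s t hs ht =>
        rw [map_add, TensorProduct.tmul_add, add_sub_add_comm]
        exact add_mem hs ht
    simpa [h] using key

lemma mem_range_sup_IMk_iff [Fact p.Prime] [CharP k p] (q : ℕ) (t : PolyA n k ⊗[k] V) :
    (show T.toPDG.X from t) ∈ LinearMap.range (T.toPDG.dk ^ q) ⊔ T.toPDG.IMk ↔
      reduce t ∈ LinearMap.range (T.d ^ q) := by
  rw [Submodule.mem_sup, PDG.dk_pow]
  constructor
  · rintro ⟨_, ⟨z, rfl⟩, w, hw, rfl⟩
    refine ⟨reduce z, ?_⟩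
    have h1 := (T.mem_IMk_iff w).mp hw
    have h2 := T.reduce_diff_pow q z
    exact (h2.symm.trans (add_zero _).symm).trans ((congrArg _ h1.symm).trans (map_add _ _ _).symm)
  · rintro ⟨v, hv⟩
    refine ⟨(T.diff ^ q) (1 ⊗ₜ v), ⟨1 ⊗ₜ v, rfl⟩, t - (T.diff ^ q) (1 ⊗ₜ v), ?_,
      add_sub_cancel ((T.diff ^ q) (1 ⊗ₜ v)) t⟩
    refine (T.mem_IMk_iff _).mpr ?_
    rw [map_sub, reduce_diff_pow, reduce_tmul, map_one, one_smul, hv, sub_self]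

lemma pow_mem_IMk_iff [Fact p.Prime] [CharP k p] (s : ℕ) (t : PolyA n k ⊗[k] V) :
    (T.toPDG.dk ^ s) (show T.toPDG.X from t) ∈ T.toPDG.IMk ↔ (T.d ^ s) (reduce t) = 0 := by
  rw [PDG.dk_pow, ← reduce_diff_pow]
  exact T.mem_IMk_iff _

lemma hBarNonzero_toPDG [Fact p.Prime] [CharP k p] {s : ℕ} {v : V} (hv : (T.d ^ s) v = 0)
    (hv' : v ∉ LinearMap.range (T.d ^ (p - s))) : T.toPDG.HBarNonzero s := by
  have h : reduce ((1 : PolyA n k) ⊗ₜ[k] v) = v := by rw [reduce_tmul, map_one, one_smul]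
  exact ⟨(1 : PolyA n k) ⊗ₜ[k] v, (T.pow_mem_IMk_iff s _).mpr (by rw [h, hv]),
    fun hmem ↦ hv' (h ▸ (T.mem_range_sup_IMk_iff _ _).mp hmem)⟩

lemma finrank_hBar_toPDG_le [Fact p.Prime] [CharP k p] {W : Type} [AddCommGroup W] [Module k W]
    {K B : Submodule k W} [Module.Finite k (K ⧸ B.comap K.subtype)] (f : V →ₗ[k] W)
    (hK : ∀ v, T.d v = 0 → f v ∈ K)
    (hB : ∀ v, T.d v = 0 → (v ∈ LinearMap.range (T.d ^ (p - 1)) ↔ f v ∈ B)) :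
    Module.finrank k (T.toPDG.HBar 1) ≤ Module.finrank k (K ⧸ B.comap K.subtype) := by
  have hker (t : PolyA n k ⊗[k] V)
      (ht : (T.toPDG.dk ^ 1) (show T.toPDG.X from t) ∈ T.toPDG.IMk) : T.d (reduce t) = 0 := by
    simpa using (T.pow_mem_IMk_iff 1 t).mp ht
  exact finrank_subquotient_le (f ∘ₗ reduce : PolyA n k ⊗[k] V →ₗ[k] W)
    (fun t ht ↦ hK _ (hker t ht))
    fun t ht ↦ (T.mem_range_sup_IMk_iff _ t).trans (hB _ (hker t ht))

end TwistData

/-- The monotone map `ℤ → ℤ` sending `p * q` to `2 * q` and `p * q + r`, `0 < r < p`,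
to `2 * q + 1`. It describes how a complex is stretched to a `p`-complex. -/
def stretch (p : ℕ) (m : ℤ) : ℤ := 2 * (m / p) + if m % p = 0 then 0 else 1

section stretch

variable {p : ℕ}

lemma stretch_mul (hp : 0 < p) (q : ℤ) : stretch p (p * q) = 2 * q := by
  have : (p : ℤ) ≠ 0 := by lia
  simp [stretch, Int.mul_ediv_cancel_left _ this]

lemma stretch_mul_add {r : ℤ} (h0 : 0 < r) (hr : r < p) (q : ℤ) :
    stretch p (p * q + r) = 2 * q + 1 := by
  have : (p : ℤ) ≠ 0 := by lia
  rw [stretch, add_comm (p * q : ℤ), Int.add_mul_ediv_left _ _ this, Int.add_mul_emod_self_left,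
    Int.ediv_eq_zero_of_lt h0.le hr, Int.emod_eq_of_lt h0.le hr, if_neg h0.ne']
  lia

lemma stretch_add_self (hp : 0 < p) (m : ℤ) : stretch p (m + p) = stretch p m + 2 := by
  have : (p : ℤ) ≠ 0 := by lia
  rw [stretch, stretch, Int.add_emod_right, Int.add_ediv_of_dvd_right dvd_rfl,
    Int.ediv_self this]
  lia

lemma stretch_add_one (hp : 1 < p) (m : ℤ) :
    stretch p (m + 1) = stretch p m ∨ stretch p (m + 1) = stretch p m + 1 := by
  have hp' : (0 : ℤ) < p := by lia
  obtain ⟨q, r, h0, hr, rfl⟩ : ∃ q r : ℤ, 0 ≤ r ∧ r < p ∧ m = p * q + r :=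
    ⟨m / p, m % p, Int.emod_nonneg _ hp'.ne', Int.emod_lt_of_pos _ hp',
      (Int.mul_ediv_add_emod m p).symm⟩
  rcases h0.eq_or_lt with rfl | h0
  · rw [add_zero, stretch_mul (by lia), stretch_mul_add one_pos (by lia)]
    exact .inr rfl
  · rw [stretch_mul_add h0 hr]
    rcases (Int.add_one_le_iff.mpr hr).eq_or_lt with h | h
    · rw [show (p : ℤ) * q + r + 1 = p * (q + 1) by rw [mul_add]; lia, stretch_mul (by lia)]
      lia
    · rw [add_assoc, stretch_mul_add (by lia) h]
      lia

lemma stretch_mono (hp : 1 < p) : Monotone (stretch p) :=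
  monotone_int_of_le_succ fun m ↦ by have := stretch_add_one hp m; lia

lemma stretch_injOn (hp : 1 < p) :
    Set.InjOn (stretch p) {m | stretch p (m - 1) ≠ stretch p m} := by
  intro m hm m' hm' h
  rw [Set.mem_ofPred_eq] at hm hm'
  have mono := stretch_mono hp
  rcases lt_trichotomy m m' with hlt | rfl | hlt
  · have := mono (show m ≤ m' - 1 by lia)
    have := mono (show m' - 1 ≤ m' by lia)
    lia
  · rfl
  · have := mono (show m' ≤ m - 1 by lia)
    have := mono (show m - 1 ≤ m by lia)
    lia

lemma stretch_add_sub_one (hp : 1 < p) {m : ℤ} (h : stretch p (m - 1) ≠ stretch p m) :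
    stretch p (m + (p - 1 : ℕ)) = stretch p m + 1 := by
  have h₁ := stretch_add_self (p := p) (by lia) (m - 1)
  have h₂ := stretch_add_one hp (m - 1)
  rw [sub_add_cancel] at h₂
  rw [show m + (p - 1 : ℕ) = m - 1 + p by lia]
  lia

lemma finite_stretch_preimage (hp : 0 < p) {s : Set ℤ} (hs : s.Finite) :
    (stretch p ⁻¹' s).Finite := by
  refine hs.preimage' fun i _ ↦
    (Set.finite_Ico (p * (i / 2) : ℤ) (p * (i / 2) + p)).subset fun m hm ↦ ?_
  have hq : i / 2 = m / p := by
    rw [← show stretch p m = i from hm, stretch]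
    lia
  have hp' : (0 : ℤ) < p := by lia
  have h₁ := Int.emod_nonneg m hp'.ne'
  have h₂ := Int.emod_lt_of_pos m hp'
  have h₃ := Int.mul_ediv_add_emod m p
  rw [hq, Set.mem_Ico]
  lia

lemma exists_stretch_eq {s : ℕ} (hs : 1 ≤ s) (hsp : s ≤ p - 1) (i : ℤ) :
    ∃ m, stretch p m = i ∧ stretch p (m - s) = i - 1 ∧ stretch p (m + (p - s : ℕ)) = i + 1 := by
  rcases Int.even_or_odd' i with ⟨q, rfl | rfl⟩
  · refine ⟨p * q, stretch_mul (by lia) q, ?_, stretch_mul_add (by lia) (by lia) q⟩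
    rw [show (p : ℤ) * q - s = p * (q - 1) + (p - s) by ring,
      stretch_mul_add (by lia) (by lia)]
    lia
  · refine ⟨p * q + s, stretch_mul_add (by lia) (by lia) q, ?_, ?_⟩
    · rw [add_sub_cancel_right, stretch_mul (by lia), add_sub_cancel_right]
    · rw [show (p : ℤ) * q + s + (p - s : ℕ) = p * (q + 1) by
        rw [mul_add, Nat.cast_sub (by lia)]; ring, stretch_mul (by lia)]
      lia

end stretch

/-- The derivation of the group algebra `k[(ℤ/p)ⁿ]` multiplying a group element by its `j`-th
coordinate. -/
noncomputable def coordDer (p n : ℕ) (k : Type) [Field k] [CharP k p] (j : Fin n) :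
    GroupRing p n k →ₗ[k] GroupRing p n k :=
  (Finsupp.lsum k fun a ↦ ZMod.castHom dvd_rfl k (a j) • AddMonoidAlgebra.lsingle a) ∘ₗ
    (AddMonoidAlgebra.coeffLinearEquiv k).toLinearMap

section coordDer

variable {p n : ℕ} {k : Type} [Field k] [CharP k p]

lemma coordDer_single (j : Fin n) (a : Fin n → ZMod p) (c : k) :
    coordDer p n k j (.single a c) =
      ZMod.castHom dvd_rfl k (a j) • AddMonoidAlgebra.single a c := by
  simp [coordDer]

lemma coordDer_mul (j : Fin n) (x y : GroupRing p n k) :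
    coordDer p n k j (x * y) = coordDer p n k j x * y + x * coordDer p n k j y := by
  induction x using AddMonoidAlgebra.induction_linear with
  | zero => simp
  | add x x' hx hx' => rw [add_mul, map_add, hx, hx', map_add]; ring
  | single a c =>
    induction y using AddMonoidAlgebra.induction_linear with
    | zero => simp
    | add y y' hy hy' => rw [mul_add, map_add, hy, hy', map_add]; ring
    | single b e =>
      rw [AddMonoidAlgebra.single_mul_single, coordDer_single, coordDer_single, coordDer_single,
        smul_mul_assoc, mul_smul_comm, AddMonoidAlgebra.single_mul_single, ← add_smul,
        Pi.add_apply, map_add]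

lemma coordDer_single_sub_one (i j : Fin n) :
    coordDer p n k j (.single (Pi.single i 1) 1 - 1) =
      if i = j then .single (Pi.single j 1) 1 else 0 := by
  rw [map_sub, AddMonoidAlgebra.one_def, coordDer_single, coordDer_single, Pi.zero_apply,
    map_zero, zero_smul, sub_zero]
  split_ifs with h
  · rw [h, Pi.single_eq_same, map_one, one_smul]
  · rw [Pi.single_eq_of_ne (Ne.symm h), map_zero, zero_smul]

lemma single_sub_one_pow_prime [Fact p.Prime] (a : Fin n → ZMod p) :
    ((.single a 1 - 1 : GroupRing p n k)) ^ p = 0 := by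
  have : CharP (GroupRing p n k) p :=
    charP_of_injective_algebraMap (FaithfulSMul.algebraMap_injective k _) p
  rw [sub_pow_char, AddMonoidAlgebra.single_pow, one_pow, one_pow, AddMonoidAlgebra.one_def,
    sub_eq_zero]
  congr 1
  ext i
  simp

/-- A group element as a unit of the group algebra. -/
noncomputable def singleUnit (a : Fin n → ZMod p) : (GroupRing p n k)ˣ where
  val := .single a 1
  inv := .single (-a) 1
  val_inv := by simp [AddMonoidAlgebra.single_mul_single, AddMonoidAlgebra.one_def]
  inv_val := by simp [AddMonoidAlgebra.single_mul_single, AddMonoidAlgebra.one_def]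

end coordDer

namespace KGCx

variable {p n N : ℕ} {k : Type} [Field k] (C : KGCx p n k N)

/-- The projection to the component of degree `i`. -/
noncomputable def proj (i : ℤ) : C.X →ₗ[GroupRing p n k] C.X :=
  letI := C.internal.chooseDecomposition
  (C.gr i).subtype ∘ₗ DirectSum.component _ _ _ i ∘ₗ
    (DirectSum.decomposeLinearEquiv C.gr).toLinearMap

lemma proj_mem (i : ℤ) (x : C.X) : C.proj i x ∈ C.gr i := Submodule.coe_mem _

lemma proj_of_mem {i : ℤ} {x : C.X} (hx : x ∈ C.gr i) : C.proj i x = x :=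
  let := C.internal.chooseDecomposition
  DirectSum.decompose_of_mem_same C.gr hx

lemma proj_of_mem_ne {i j : ℤ} {x : C.X} (hx : x ∈ C.gr i) (hij : i ≠ j) : C.proj j x = 0 :=
  let := C.internal.chooseDecomposition
  DirectSum.decompose_of_mem_ne C.gr hx hij

lemma mem_of_proj_mem {x : C.X} {S : Submodule (GroupRing p n k) C.X}
    (h : ∀ i, C.proj i x ∈ S) : x ∈ S := by
  classical
  let := C.internal.chooseDecomposition
  rw [← DirectSum.sum_support_decompose C.gr x]
  exact sum_mem fun i _ ↦ h i

lemma proj_d (i : ℤ) (x : C.X) : C.proj i (C.d x) = C.d (C.proj (i + 1) x) := by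
  let := C.internal.chooseDecomposition
  induction x using DirectSum.Decomposition.inductionOn C.gr with
  | zero => simp
  | @homogeneous j x =>
    by_cases h : j = i + 1
    · subst h
      rw [C.proj_of_mem x.2, C.proj_of_mem (by simpa using C.d_deg _ _ x.2)]
    · rw [C.proj_of_mem_ne x.2 h, map_zero, C.proj_of_mem_ne (C.d_deg _ _ x.2) (by lia)]
  | add x y hx hy => simp only [map_add, hx, hy]

lemma d_pow_mem {i : ℤ} {x : C.X} (hx : x ∈ C.gr i) (r : ℕ) : (C.d ^ r) x ∈ C.gr (i - r) := by
  induction r with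
  | zero => simpa using hx
  | succ r ih =>
    rw [pow_succ', Module.End.mul_apply, Nat.cast_succ, ← sub_sub]
    exact C.d_deg _ _ ih

variable {C} in
lemma NonAcyclic.exists_mem_gr (h : C.NonAcyclic) :
    ∃ i, ∃ x ∈ C.gr i, C.d x = 0 ∧ x ∉ LinearMap.range C.d := by
  obtain ⟨x, hx, hx'⟩ := h
  contrapose! hx'
  refine C.mem_of_proj_mem fun i ↦ hx' i _ (C.proj_mem i x) ?_
  have := C.proj_d (i - 1) x
  rw [hx, map_zero, sub_add_cancel] at this
  exact this.symm

variable {C} in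
lemma IsPerfect.finite [NeZero p] (h : C.IsPerfect) : Module.Finite k C.X := by
  obtain ⟨ι, _, -, b, -⟩ := h
  have := Module.Finite.of_basis b
  have : Module.Finite k (GroupRing p n k) :=
    Module.Finite.equiv (AddMonoidAlgebra.coeffLinearEquiv k).symm
  exact Module.Finite.trans (GroupRing p n k) C.X

lemma finite_gr_ne_bot [Module.Finite k C.X] : {i | C.gr i ≠ ⊥}.Finite :=
  have : IsNoetherian (GroupRing p n k) C.X := isNoetherian_of_tower k inferInstance
  WellFoundedGT.finite_ne_bot_of_iSupIndep C.internal.submodule_iSupIndep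

section basisDer

variable [CharP k p] {C} {ι : Type} (b : Module.Basis ι (GroupRing p n k) C.X)

/-- The extension of the derivation `coordDer` to a free module killing the given basis. -/
noncomputable def basisDer (j : Fin n) : Module.End k C.X :=
  (b.repr.symm.toLinearMap.restrictScalars k) ∘ₗ
    Finsupp.mapRange.linearMap (coordDer p n k j) ∘ₗ (b.repr.toLinearMap.restrictScalars k)

lemma repr_basisDer (j : Fin n) (x : C.X) (a : ι) :
    b.repr (basisDer b j x) a = coordDer p n k j (b.repr x a) := by
  simp [basisDer]

lemma basisDer_smul (j : Fin n) (c : GroupRing p n k) (x : C.X) :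
    basisDer b j (c • x) = coordDer p n k j c • x + c • basisDer b j x := by
  refine b.ext_elem fun a ↦ ?_
  simp [repr_basisDer, coordDer_mul]

lemma basisDer_mem {deg : ι → ℤ} (hb : ∀ a, b a ∈ C.gr (deg a)) (j : Fin n) {i : ℤ} {x : C.X}
    (hx : x ∈ C.gr i) : basisDer b j x ∈ C.gr i := by
  have repr_proj (x : C.X) (a : ι) :
      b.repr (C.proj i x) a = if deg a = i then b.repr x a else 0 := by
    suffices (Finsupp.lapply a ∘ₗ b.repr.toLinearMap) ∘ₗ C.proj i =
        if deg a = i then Finsupp.lapply a ∘ₗ b.repr.toLinearMap else 0 by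
      have := LinearMap.congr_fun this x
      split_ifs at this ⊢ <;> simpa using this
    refine b.ext fun a' ↦ ?_
    by_cases h : deg a' = i
    · have : C.proj i (b a') = b a' := C.proj_of_mem (h ▸ hb a')
      by_cases haa : a' = a
      · simp [this, ← haa, h]
      · split_ifs <;> simp [this, haa]
    · have : C.proj i (b a') = 0 := C.proj_of_mem_ne (hb a') h
      by_cases haa : a' = a
      · simp [this, ← haa, h]
      · split_ifs <;> simp [this, haa]
  suffices C.proj i (basisDer b j x) = basisDer b j x from this ▸ C.proj_mem i _
  refine b.ext_elem fun a ↦ ?_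
  rw [repr_proj, repr_basisDer, ← C.proj_of_mem hx, repr_proj]
  split_ifs <;> simp

end basisDer

end KGCx

namespace KGCx

variable {p n : ℕ} {k : Type} [Field k] (C : KGCx p n k 2)

/-- The module underlying the `p`-complex obtained from the complex `C` by repeating every
other term `p - 1` times. -/
noncomputable def stretched : Submodule (GroupRing p n k) (ℤ → C.X) :=
  Submodule.pi Set.univ fun m ↦ C.gr (stretch p m)

variable {C} in
lemma apply_mem_gr (f : C.stretched) (m : ℤ) : f.1 m ∈ C.gr (stretch p m) := f.2 m trivial

/-- The component of degree `m` of the stretched complex. -/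
def stretchedGr (m : ℤ) : Submodule k C.stretched where
  carrier := {f | ∀ j, j ≠ m → f.1 j = 0}
  zero_mem' _ _ := rfl
  add_mem' hf hg j hj := by simp [hf j hj, hg j hj]
  smul_mem' c f hf j hj := by simp [hf j hj]

/-- The stretched module is nonzero in finitely many degrees. -/
lemma exists_finset_stretched_eq_zero [Fact p.Prime] [Module.Finite k C.X] :
    ∃ S : Finset ℤ, ∀ f : C.stretched, ∀ m ∉ S, f.1 m = 0 := by
  have hfin := finite_stretch_preimage (Fact.out : p.Prime).pos C.finite_gr_ne_bot
  refine ⟨hfin.toFinset, fun f m hm ↦ ?_⟩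
  have : C.gr (stretch p m) = ⊥ := by simpa using hm
  exact (Submodule.mem_bot _).mp (this ▸ apply_mem_gr f m)

/-- The element of the stretched complex supported in degree `m`. -/
noncomputable def stretchedSingle {m : ℤ} {x : C.X} (hx : x ∈ C.gr (stretch p m)) : C.stretched :=
  ⟨Pi.single m x, fun j _ ↦ by
    by_cases h : j = m
    · subst h
      simpa using hx
    · simp [Pi.single_eq_of_ne h]⟩

lemma isInternal_stretchedGr [Fact p.Prime] [Module.Finite k C.X] :
    DirectSum.IsInternal C.stretchedGr := by
  rw [DirectSum.isInternal_submodule_iff_iSupIndep_and_iSup_eq_top]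
  constructor
  · refine fun m ↦ Submodule.disjoint_def.mpr fun f hf hf' ↦ ?_
    have hle : ⨆ j, ⨆ (_ : j ≠ m), C.stretchedGr j ≤
        LinearMap.ker ((LinearMap.proj m ∘ₗ C.stretched.subtype).restrictScalars k) :=
      iSup₂_le fun j hj f hf ↦ hf m hj.symm
    ext j
    by_cases h : j = m
    · exact h ▸ hle hf'
    · exact hf j h
  · refine eq_top_iff.mpr fun f _ ↦ ?_
    obtain ⟨S, hS⟩ := C.exists_finset_stretched_eq_zero
    have : f = ∑ m ∈ S, C.stretchedSingle (apply_mem_gr f m) := by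
      ext j
      rw [Submodule.coe_sum, Finset.sum_apply]
      simp only [stretchedSingle, Finset.sum_pi_single]
      split_ifs with h
      · rfl
      · exact hS f j h
    rw [this]
    exact sum_mem fun m _ ↦ Submodule.mem_iSup_of_mem m fun j hj ↦ Pi.single_eq_of_ne hj _

lemma finite_stretched [Fact p.Prime] [Module.Finite k C.X] : Module.Finite k C.stretched := by
  obtain ⟨S, hS⟩ := C.exists_finset_stretched_eq_zero
  refine Module.Finite.of_injective (((LinearMap.funLeft _ C.X ((↑) : S → ℤ)) ∘ₗ
    C.stretched.subtype).restrictScalars k) fun f g hfg ↦ ?_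
  ext m
  by_cases hm : m ∈ S
  · exact congrFun hfg ⟨m, hm⟩
  · rw [hS f m hm, hS g m hm]

/-- The exponent of the differential of `C` in the map between the terms of degrees `m + r` and
`m` of the stretched complex. -/
def stretchExp (p r : ℕ) (m : ℤ) : ℕ := (stretch p (m + r) - stretch p m).toNat

lemma stretchExp_spec [Fact p.Prime] (r : ℕ) (m : ℤ) :
    (stretchExp p r m : ℤ) = stretch p (m + r) - stretch p m :=
  Int.toNat_of_nonneg
    (sub_nonneg.mpr (stretch_mono (Fact.out : p.Prime).one_lt (by lia)))

/-- The maps of degree `-r` of the stretched complex given by powers of the differential. -/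
noncomputable def stretchedPow [Fact p.Prime] (r : ℕ) :
    C.stretched →ₗ[GroupRing p n k] C.stretched where
  toFun f := ⟨fun m ↦ (C.d ^ stretchExp p r m) (f.1 (m + r)), fun m _ ↦ by
    simpa [stretchExp_spec] using C.d_pow_mem (apply_mem_gr f (m + r)) (stretchExp p r m)⟩
  map_add' f g := by ext; simp
  map_smul' c f := by ext; simp

section

variable [Fact p.Prime]

lemma stretchedPow_apply (r : ℕ) (f : C.stretched) (m : ℤ) :
    (C.stretchedPow r f).1 m = (C.d ^ stretchExp p r m) (f.1 (m + r)) := rfl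

lemma stretchedPow_one_pow (r : ℕ) : C.stretchedPow 1 ^ r = C.stretchedPow r := by
  induction r with
  | zero =>
    ext f m
    simp [stretchedPow_apply, stretchExp]
  | succ r ih =>
    rw [pow_succ, ih]
    ext f m
    rw [Module.End.mul_apply, stretchedPow_apply, stretchedPow_apply, stretchedPow_apply,
      ← Module.End.mul_apply, ← pow_add]
    have h₁ := stretchExp_spec (p := p) r m
    have h₂ := stretchExp_spec (p := p) 1 (m + r)
    have h₃ := stretchExp_spec (p := p) (r + 1) m
    push_cast at h₂ h₃
    rw [← add_assoc] at h₃
    rw [show stretchExp p r m + stretchExp p 1 (m + r) = stretchExp p (r + 1) m by lia]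
    push_cast
    rw [add_assoc]

lemma stretchedPow_prime : C.stretchedPow p = 0 := by
  ext f m
  have h := stretchExp_spec (p := p) p m
  rw [stretch_add_self (Fact.out : p.Prime).pos] at h
  rw [stretchedPow_apply, show stretchExp p p m = 2 by lia, C.d_pow]
  rfl

/-- The differential of the stretched complex as a `k`-linear map. -/
noncomputable def stretchedD : Module.End k C.stretched := (C.stretchedPow 1).restrictScalars k

lemma stretchedD_pow (r : ℕ) :
    C.stretchedD ^ r = (C.stretchedPow r).restrictScalars k := by
  ext f : 1
  rw [← stretchedPow_one_pow, LinearMap.restrictScalars_apply, Module.End.pow_apply,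
    Module.End.pow_apply]
  rfl

variable {C} in
lemma stretchedD_pow_apply (r : ℕ) (f : C.stretched) (m : ℤ) :
    ((C.stretchedD ^ r) f).1 m = (C.d ^ stretchExp p r m) (f.1 (m + r)) := by
  rw [stretchedD_pow]
  rfl

section

variable {C} [CharP k p] {ι : Type} (b : Module.Basis ι (GroupRing p n k) C.X) {deg : ι → ℤ}
  (hb : ∀ a, b a ∈ C.gr (deg a))

/-- The termwise extension of `basisDer` to the stretched complex. -/
noncomputable def stretchedDer (j : Fin n) : Module.End k C.stretched where
  toFun f := ⟨fun m ↦ basisDer b j (f.1 m), fun m _ ↦ basisDer_mem b hb j (apply_mem_gr f m)⟩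
  map_add' f g := by ext; simp
  map_smul' c f := by ext; simp

lemma stretchedDer_smul (j : Fin n) (c : GroupRing p n k) (f : C.stretched) :
    stretchedDer b hb j (c • f) = coordDer p n k j c • f + c • stretchedDer b hb j f :=
  Subtype.ext (funext fun _ ↦ basisDer_smul b j c _)

/-- The stretched complex of a perfect complex, with the action of the group. -/
noncomputable def twistData [Module.Finite k C.X] : TwistData p n k C.stretched where
  gr := C.stretchedGr
  internal := C.isInternal_stretchedGr
  d := C.stretchedD
  y i := Algebra.lsmul k k C.stretched (.single (Pi.single i 1) 1 - 1 : GroupRing p n k)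
  g i := Units.map (Algebra.lsmul (A := GroupRing p n k) k k C.stretched).toRingHom.toMonoidHom
    (singleUnit (Pi.single i 1))
  θ := stretchedDer b hb
  d_deg m f hf j hj := by
    rw [← pow_one C.stretchedD, stretchedD_pow_apply, hf _ (by lia), map_zero]
  y_deg i m f hf j hj := by
    change (_ : GroupRing p n k) • f.1 j = 0
    rw [hf j hj, smul_zero]
  θ_deg i m f hf j hj := by
    change basisDer b i (f.1 j) = 0
    rw [hf j hj, map_zero]
  d_pow := by
    rw [stretchedD_pow, stretchedPow_prime]
    rfl
  y_pow i := by rw [← map_pow, single_sub_one_pow_prime, map_zero]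
  commute_d_y i := LinearMap.ext fun f ↦ (C.stretchedPow 1).map_smul _ f
  commute_y_y i j := (Commute.all _ _).map _
  commute_d_g i := LinearMap.ext fun f ↦ (C.stretchedPow 1).map_smul _ f
  commute_y_g i j := (Commute.all _ _).map (Algebra.lsmul k k C.stretched)
  y_θ i j := by
    ext f : 1
    rw [LinearMap.sub_apply, Module.End.mul_apply, Module.End.mul_apply, Algebra.lsmul_coe]
    dsimp only
    rw [stretchedDer_smul, coordDer_single_sub_one, sub_add_cancel_right]
    split_ifs
    · rfl
    · rw [zero_smul, neg_zero, LinearMap.zero_apply]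

end

end

variable {C} [Fact p.Prime]

lemma exists_mem_ker_stretchedD_pow {s : ℕ} (hs : 1 ≤ s) (hsp : s ≤ p - 1) (h : C.NonAcyclic) :
    ∃ f : C.stretched, (C.stretchedD ^ s) f = 0 ∧
      f ∉ LinearMap.range (C.stretchedD ^ (p - s)) := by
  obtain ⟨i, x, hxi, hx, hx'⟩ := h.exists_mem_gr
  obtain ⟨m, rfl, hm₁, hm₂⟩ := exists_stretch_eq hs hsp i
  refine ⟨C.stretchedSingle hxi, ?_, ?_⟩
  · ext j
    rw [stretchedD_pow_apply]
    by_cases hj : j + s = m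
    · have := stretchExp_spec (p := p) s j
      rw [hj, show j = m - s by lia, hm₁] at this
      rw [show j = m - s by lia, show stretchExp p s (m - s) = 1 by lia, sub_add_cancel, pow_one]
      simp [stretchedSingle, hx]
    · simp [stretchedSingle, Pi.single_eq_of_ne hj]
  · rintro ⟨f, hf⟩
    have := stretchExp_spec (p := p) (p - s) m
    have hfm : ((C.stretchedD ^ (p - s)) f).1 m = x := by simp [hf, stretchedSingle]
    rw [stretchedD_pow_apply, show stretchExp p (p - s) m = 1 by lia, pow_one] at hfm
    exact hx' ⟨_, hfm⟩

lemma apply_of_stretchedD_eq_zero {f : C.stretched} (hf : C.stretchedD f = 0) (m : ℤ) :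
    (stretch p (m - 1) = stretch p m → f.1 m = 0) ∧ C.d (f.1 m) = 0 := by
  have h : ((C.stretchedD ^ 1) f).1 (m - 1) = 0 := by rw [pow_one, hf]; rfl
  have he := stretchExp_spec (p := p) 1 (m - 1)
  have hm := stretch_add_one (Fact.out : p.Prime).one_lt (m - 1)
  rw [stretchedD_pow_apply, Nat.cast_one, sub_add_cancel] at h
  rw [Nat.cast_one, sub_add_cancel] at he
  rw [sub_add_cancel] at hm
  rcases hm with hm | hm
  · rw [show stretchExp p 1 (m - 1) = 0 by lia, pow_zero, Module.End.one_apply] at h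
    exact ⟨fun _ ↦ h, by rw [h, map_zero]⟩
  · rw [show stretchExp p 1 (m - 1) = 1 by lia, pow_one] at h
    exact ⟨fun h' ↦ by lia, h⟩

lemma stretchExp_sub_one {m : ℤ} (hm : stretch p (m - 1) ≠ stretch p m) :
    stretchExp p (p - 1) m = 1 := by
  have h₁ := stretchExp_spec (p := p) (p - 1) m
  rw [stretch_add_sub_one (Fact.out : p.Prime).one_lt hm] at h₁
  lia

lemma proj_sum_of_stretchedD_eq_zero {S : Finset ℤ} {f : C.stretched}
    (hS : ∀ m ∉ S, f.1 m = 0) (hf : C.stretchedD f = 0) {m : ℤ}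
    (hm : stretch p (m - 1) ≠ stretch p m) :
    C.proj (stretch p m) (∑ j ∈ S, f.1 j) = f.1 m := by
  rw [map_sum, Finset.sum_eq_single m]
  · exact C.proj_of_mem (apply_mem_gr f m)
  · intro j _ hjm
    by_cases hj : stretch p (j - 1) = stretch p j
    · rw [(apply_of_stretchedD_eq_zero hf j).1 hj, map_zero]
    · exact C.proj_of_mem_ne (apply_mem_gr f j) fun h ↦
        hjm (stretch_injOn (Fact.out : p.Prime).one_lt hj hm h)
  · intro h
    rw [hS m h, map_zero]

lemma mem_range_stretchedD_pow_iff {S : Finset ℤ} {f : C.stretched}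
    (hS : ∀ m ∉ S, f.1 m = 0) (hf : C.stretchedD f = 0) :
    f ∈ LinearMap.range (C.stretchedD ^ (p - 1)) ↔ ∑ m ∈ S, f.1 m ∈ LinearMap.range C.d := by
  constructor
  · rintro ⟨g, rfl⟩
    refine sum_mem fun m _ ↦ ?_
    by_cases hm : stretch p (m - 1) = stretch p m
    · rw [(apply_of_stretchedD_eq_zero hf m).1 hm]
      exact zero_mem _
    · rw [stretchedD_pow_apply, stretchExp_sub_one hm, pow_one]
      exact ⟨_, rfl⟩
  · rintro ⟨x, hx⟩
    classical
    let g : C.stretched := ⟨fun m ↦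
      if stretch p (m - (p - 1 : ℕ) - 1) ≠ stretch p (m - (p - 1 : ℕ)) then
        C.proj (stretch p m) x else 0, fun m _ ↦ by
      dsimp only
      split_ifs
      · exact C.proj_mem _ x
      · exact zero_mem _⟩
    refine ⟨g, ?_⟩
    ext m
    rw [stretchedD_pow_apply]
    by_cases hm : stretch p (m - 1) = stretch p m
    · rw [(apply_of_stretchedD_eq_zero hf m).1 hm]
      simp [g, hm]
    · rw [stretchExp_sub_one hm, pow_one, ← proj_sum_of_stretchedD_eq_zero hS hf hm, ← hx,
        C.proj_d, ← stretch_add_sub_one (Fact.out : p.Prime).one_lt hm]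
      simp [g, hm]

end KGCx

theorem stmt_1 (p n : ℕ) [Fact p.Prime] (k : Type) [Field k] [CharP k p]
    (C : KGCx p n k 2) (hperf : C.IsPerfect) (hna : C.NonAcyclic) :
    sInf (BSet p n k) ≤ Module.finrank k C.TotalHomology := by
  have := hperf.finite
  have := C.finite_stretched
  obtain ⟨S, hS⟩ := C.exists_finset_stretched_eq_zero
  obtain ⟨ι, _, deg, b, hb⟩ := hperf
  let T := KGCx.twistData b hb
  have hmem : Module.finrank k (T.toPDG.HBar 1) ∈ BSet p n k := by
    refine ⟨T.toPDG, T.toPDG_isFreeFG, fun s hs hsp ↦ ?_,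
      fun s _ hsp ↦ T.finite_toPDG_H (by lia), rfl⟩
    obtain ⟨f, hf, hf'⟩ := KGCx.exists_mem_ker_stretchedD_pow hs hsp hna
    exact T.hBarNonzero_toPDG hf hf'
  refine (Nat.sInf_le hmem).trans ?_
  let F : C.stretched →ₗ[k] C.X :=
    ((∑ m ∈ S, LinearMap.proj m) ∘ₗ C.stretched.subtype).restrictScalars k
  have hF (f : C.stretched) : F f = ∑ m ∈ S, f.1 m := by simp [F]
  refine T.finrank_hBar_toPDG_le F (fun f hf ↦ ?_) fun f hf ↦ ?_
  · rw [hF]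
    exact sum_mem fun m _ ↦ (KGCx.apply_of_stretchedD_eq_zero hf m).2
  · rw [hF]
    exact KGCx.mem_range_stretchedD_pow_iff (hS f) hf
end

section
/- Let p be a prime, k a field of characteristic p, A = k[x_1,…,x_n] graded by deg(x_i) = −1, and M a finitely generated free p-DG A-module. Let m ⊂ A be a maximal ideal of the ungraded polynomial ring A with m ≠ (x_1,…,x_n). If dim_k {}_sH_•(M) < ∞ for all 1 ≤ s ≤ p−1, then for the p-differential A/m-module M⊗_A A/m one has {}_sH(M⊗_A A/m) = ker(d^s)/im(d^{p−s}) = 0 for all 1 ≤ s ≤ p−1. -/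
/-- An ideal generated by a (weakly) regular sequence. -/
inductive IsRegularlyGenerated {R : Type} [CommRing R] : Ideal R → Prop
  | bot : IsRegularlyGenerated ⊥
  | sup_span (I : Ideal R) (f : R) (hI : IsRegularlyGenerated I)
      (hf : ∀ a, f * a ∈ I → a ∈ I) : IsRegularlyGenerated (I ⊔ Ideal.span {f})

namespace IsRegularlyGenerated

theorem map_ringEquiv {R S : Type} [CommRing R] [CommRing S] (e : R ≃+* S) {I : Ideal R}
    (h : IsRegularlyGenerated I) : IsRegularlyGenerated (I.map e) := by
  induction h with
  | bot => rw [Ideal.map_bot]; exact .bot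
  | sup_span I f _ hf ih =>
    rw [Ideal.map_sup, Ideal.map_span, Set.image_singleton]
    refine .sup_span _ _ ih fun a ha => ?_
    rw [← Ideal.comap_symm, Ideal.mem_comap] at ha ⊢
    refine hf _ ?_
    simpa using ha

theorem map_C {R : Type} [CommRing R] {I : Ideal R} (h : IsRegularlyGenerated I) :
    IsRegularlyGenerated (I.map (Polynomial.C : R →+* Polynomial R)) := by
  induction h with
  | bot => rw [Ideal.map_bot]; exact .bot
  | sup_span I f _ hf ih =>
    rw [Ideal.map_sup, Ideal.map_span, Set.image_singleton]
    refine .sup_span _ _ ih fun a ha => ?_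
    rw [Ideal.mem_map_C_iff] at ha ⊢
    intro n
    refine hf _ ?_
    simpa using ha n

theorem polynomial_of_isMaximal {R : Type} [CommRing R] [IsJacobsonRing R]
    (h : ∀ q : Ideal R, q.IsMaximal → IsRegularlyGenerated q)
    (m : Ideal (Polynomial R)) (hm : m.IsMaximal) : IsRegularlyGenerated m := by
  set q : Ideal R := m.comap Polynomial.C with hq
  have hqm : q.IsMaximal := Polynomial.isMaximal_comap_C_of_isJacobsonRing m
  let : Field (R ⧸ q) := Ideal.Quotient.field q
  set φ : Polynomial R →+* Polynomial (R ⧸ q) := Polynomial.mapRingHom (Ideal.Quotient.mk q)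
  have hφ : Function.Surjective φ := Polynomial.map_surjective _ Ideal.Quotient.mk_surjective
  have hker : RingHom.ker φ = q.map Polynomial.C := by
    rw [Polynomial.ker_mapRingHom, Ideal.mk_ker]
  obtain ⟨g, hg⟩ := (IsPrincipalIdealRing.principal (m.map φ)).principal
  obtain ⟨f, rfl⟩ := hφ g
  have hle : q.map Polynomial.C ≤ m := Ideal.map_comap_le
  have hmf : m = q.map Polynomial.C ⊔ Ideal.span {f} := by
    have h1 : m = (m.map φ).comap φ := by
      rw [Ideal.comap_map_of_surjective' φ hφ, hker, sup_eq_left.2 hle]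
    have h2 : m.map φ = (Ideal.span {f}).map φ := by
      rw [hg, Ideal.map_span, Set.image_singleton]
    rw [h2, Ideal.comap_map_of_surjective' φ hφ, hker] at h1
    rw [sup_comm]; exact h1
  by_cases hf0 : φ f = 0
  · have hf : f ∈ q.map Polynomial.C := by rw [← hker]; exact hf0
    have : m = q.map Polynomial.C := by
      rw [hmf, sup_eq_left, Ideal.span_singleton_le_iff_mem]; exact hf
    rw [this]
    exact (h q hqm).map_C
  · rw [hmf]
    refine .sup_span _ _ (h q hqm).map_C fun a ha => ?_
    rw [← hker, RingHom.mem_ker, map_mul] at ha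
    rw [← hker, RingHom.mem_ker]
    exact (mul_eq_zero.1 ha).resolve_left hf0

theorem mvPolynomial_of_isMaximal {k : Type} [Field k] (n : ℕ) :
    ∀ m : Ideal (MvPolynomial (Fin n) k), m.IsMaximal → IsRegularlyGenerated m := by
  induction n with
  | zero =>
    intro m hm
    let e : MvPolynomial (Fin 0) k ≃+* k := (MvPolynomial.isEmptyAlgEquiv k (Fin 0)).toRingEquiv
    have hF : IsField (MvPolynomial (Fin 0) k) := e.toMulEquiv.isField (Field.toIsField k)
    let := hF.toField
    rcases Ideal.eq_bot_or_top m with h | h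
    · rw [h]; exact .bot
    · exact absurd h hm.ne_top
  | succ n ih =>
    intro m hm
    let e := (MvPolynomial.finSuccEquiv k n).toRingEquiv
    have hm' : (m.map e).IsMaximal := Ideal.map_isMaximal_of_equiv e
    have := (polynomial_of_isMaximal ih _ hm').map_ringEquiv e.symm
    rwa [← Ideal.comap_symm, RingEquiv.symm_symm, Ideal.comap_map_of_bijective e e.bijective]
      at this

end IsRegularlyGenerated

section Reduction

variable {R X : Type} [CommRing R] [AddCommGroup X] [Module R X]

theorem Module.Basis.mem_smul_top_iff {ι : Type} [Fintype ι] (b : Module.Basis ι R X) (I : Ideal R)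
    (y : X) : y ∈ I • (⊤ : Submodule R X) ↔ ∀ i, b.repr y i ∈ I := by
  constructor
  · intro hy i
    refine Submodule.smul_induction_on hy (fun r hr x _ => ?_) fun x y hx hy => ?_
    · simpa using I.mul_mem_right _ hr
    · simpa using I.add_mem hx hy
  · intro h
    rw [← b.sum_repr y]
    exact Submodule.sum_mem _ fun i _ => Submodule.smul_mem_smul (h i) trivial

/-- `ker d₁ / im d₂` on `X / I X` is `g`-power torsion. -/
def IsPowTorsionHomology (g : R) (d₁ d₂ : X →ₗ[R] X) (I : Ideal R) : Prop :=
  ∀ x, d₁ x ∈ I • (⊤ : Submodule R X) →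
    ∃ N : ℕ, g ^ N • x ∈ LinearMap.range d₂ ⊔ I • (⊤ : Submodule R X)

theorem LinearMap.apply_mem_smul_top (d : X →ₗ[R] X) {I : Ideal R} {u : X}
    (hu : u ∈ I • (⊤ : Submodule R X)) : d u ∈ I • (⊤ : Submodule R X) :=
  (Submodule.smul_top_le_comap_smul_top I d) hu

theorem IsPowTorsionHomology.sup_span {g : R} {d₁ d₂ : X →ₗ[R] X} {I : Ideal R} {f : R}
    (h₁₂ : IsPowTorsionHomology g d₁ d₂ I) (h₂₁ : IsPowTorsionHomology g d₂ d₁ I)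
    (hd : ∀ x, d₂ (d₁ x) = 0)
    (hf : ∀ y : X, f • y ∈ I • (⊤ : Submodule R X) → y ∈ I • (⊤ : Submodule R X)) :
    IsPowTorsionHomology g d₁ d₂ (I ⊔ Ideal.span {f}) := by
  have hle : I • (⊤ : Submodule R X) ≤ (I ⊔ Ideal.span {f}) • (⊤ : Submodule R X) :=
    Submodule.smul_mono_left le_sup_left
  intro x hx
  rw [Submodule.sup_smul, Submodule.mem_sup] at hx
  obtain ⟨u, hu, fy, hfy, hx⟩ := hx
  rw [Submodule.ideal_span_singleton_smul] at hfy
  obtain ⟨y, -, rfl⟩ := (Submodule.mem_smul_pointwise_iff_exists _ _ _).1 hfy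
  obtain ⟨N, hN⟩ := h₂₁ y (hf _ (by
    have : f • d₂ y = - d₂ u := by
      rw [eq_neg_iff_add_eq_zero, ← map_smul, ← map_add, add_comm, hx, hd]
    rw [this]
    exact Submodule.neg_mem _ (d₂.apply_mem_smul_top hu)))
  obtain ⟨_, ⟨z, rfl⟩, v, hv, hz⟩ := Submodule.mem_sup.1 hN
  obtain ⟨N', hN'⟩ := h₁₂ (g ^ N • x - f • z) (by
    have : d₁ (g ^ N • x - f • z) = g ^ N • u + f • v := by
      have hv' : v = g ^ N • y - d₁ z := by rw [← hz]; abel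
      rw [map_sub, map_smul, map_smul, ← hx, hv']
      module
    rw [this]
    exact Submodule.add_mem _ (Submodule.smul_mem _ _ hu) (Submodule.smul_mem _ _ hv))
  refine ⟨N' + N, ?_⟩
  have : g ^ (N' + N) • x = g ^ N' • (g ^ N • x - f • z) + f • (g ^ N' • z) := by
    rw [pow_add]; module
  rw [this]
  refine Submodule.add_mem _ (sup_le_sup_left hle _ hN') (Submodule.mem_sup_right ?_)
  exact Submodule.smul_mem_smul (Ideal.mem_sup_right (Ideal.mem_span_singleton_self f)) trivial

theorem IsPowTorsionHomology.of_isRegularlyGenerated {ι : Type} [Fintype ι]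
    (b : Module.Basis ι R X) {g : R} {d₁ d₂ : X →ₗ[R] X}
    (hd₁₂ : ∀ x, d₁ (d₂ x) = 0) (hd₂₁ : ∀ x, d₂ (d₁ x) = 0)
    (h₁₂ : IsPowTorsionHomology g d₁ d₂ ⊥) (h₂₁ : IsPowTorsionHomology g d₂ d₁ ⊥)
    {I : Ideal R} (hI : IsRegularlyGenerated I) :
    IsPowTorsionHomology g d₁ d₂ I ∧ IsPowTorsionHomology g d₂ d₁ I := by
  induction hI with
  | bot => exact ⟨h₁₂, h₂₁⟩
  | sup_span I f _ hf ih =>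
    have hf' : ∀ y : X, f • y ∈ I • (⊤ : Submodule R X) → y ∈ I • (⊤ : Submodule R X) := by
      intro y hy
      rw [b.mem_smul_top_iff] at hy ⊢
      exact fun i => hf _ (by simpa using hy i)
    exact ⟨ih.1.sup_span ih.2 hd₂₁ hf', ih.2.sup_span ih.1 hd₁₂ hf'⟩

end Reduction

namespace PDG

variable {p n : ℕ} {k : Type} [Field k] (M : PDG p n k)

theorem dk_pow_apply (s : ℕ) (x : M.X) : (M.dk ^ s) x = (M.d ^ s) x := by
  induction s generalizing x with
  | zero => rfl
  | succ s ih => rw [pow_succ, pow_succ, Module.End.mul_apply, Module.End.mul_apply, ih]; rfl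

/-- The projection of `M` onto its component of degree `j`. -/
noncomputable def proj (j : ℤ) : M.X →ₗ[k] M.X :=
  letI := M.internal.chooseDecomposition
  (M.gr j).subtype ∘ₗ DirectSum.component k ℤ (fun i => M.gr i) j ∘ₗ
    (DirectSum.decomposeLinearEquiv M.gr).toLinearMap

theorem proj_of_mem {j : ℤ} {x : M.X} (hx : x ∈ M.gr j) : M.proj j x = x := by
  let := M.internal.chooseDecomposition
  exact DirectSum.decompose_of_mem_same M.gr hx

theorem proj_of_mem_ne {i j : ℤ} {x : M.X} (hx : x ∈ M.gr i) (hij : i ≠ j) : M.proj j x = 0 := by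
  let := M.internal.chooseDecomposition
  exact DirectSum.decompose_of_mem_ne M.gr hx hij

theorem proj_mem (j : ℤ) (x : M.X) : M.proj j x ∈ M.gr j := Submodule.coe_mem _

theorem mem_of_forall_proj_mem (S : Submodule k M.X) {x : M.X} (h : ∀ j, M.proj j x ∈ S) :
    x ∈ S := by
  let := M.internal.chooseDecomposition
  classical
  rw [← DirectSum.sum_support_decompose M.gr x]
  exact Submodule.sum_mem _ fun j _ => h j

theorem d_pow_mem (s : ℕ) {j : ℤ} {x : M.X} (hx : x ∈ M.gr j) : (M.d ^ s) x ∈ M.gr (j - s) := by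
  induction s with
  | zero => simpa using hx
  | succ s ih =>
    rw [pow_succ', Module.End.mul_apply]
    have := M.d_deg _ _ ih
    rwa [sub_sub] at this

theorem X_pow_smul_mem (i : Fin n) (N : ℕ) {j : ℤ} {x : M.X} (hx : x ∈ M.gr j) :
    (MvPolynomial.X i : PolyA n k) ^ N • x ∈ M.gr (j - N) := by
  induction N with
  | zero => simpa using hx
  | succ N ih =>
    rw [pow_succ', mul_smul]
    have := M.x_deg i _ _ ih
    rwa [sub_sub] at this

theorem d_pow_proj (s : ℕ) (j : ℤ) (x : M.X) :
    (M.d ^ s) (M.proj j x) = M.proj (j - s) ((M.d ^ s) x) := by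
  have hx : x ∈ ⨆ i, M.gr i := by rw [M.internal.submodule_iSup_eq_top]; trivial
  induction hx using Submodule.iSup_induction' with
  | mem i x hx =>
    have hd := M.d_pow_mem s hx
    by_cases hij : i = j
    · subst hij
      rw [M.proj_of_mem hx, M.proj_of_mem hd]
    · rw [M.proj_of_mem_ne hx hij, M.proj_of_mem_ne hd (by simpa using hij), map_zero]
  | zero => simp
  | add x y _ _ hx hy => simp only [map_add, hx, hy]

theorem exists_X_pow_smul_mem_range_of_mem_gr (i : Fin n) {s : ℕ}
    (hfin : FiniteDimensional k (M.H s)) {j : ℤ} {z : M.X} (hz : z ∈ M.gr j)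
    (hdz : (M.d ^ s) z = 0) :
    ∃ N : ℕ, (MvPolynomial.X i : PolyA n k) ^ N • z ∈ LinearMap.range (M.d ^ (p - s)) := by
  set a : PolyA n k := MvPolynomial.X i
  let v : ℕ → LinearMap.ker (M.dk ^ s) := fun N => ⟨a ^ N • z, by
    rw [LinearMap.mem_ker, dk_pow_apply, map_smul, hdz, smul_zero]⟩
  let S := (LinearMap.range (M.dk ^ (p - s))).comap (LinearMap.ker (M.dk ^ s)).subtype
  have hdep : ¬ LinearIndependent k fun N => S.mkQ (v N) := fun h =>
    not_finite_iff_infinite.2 inferInstance (h.finite : Finite ℕ)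
  rw [not_linearIndependent_iff] at hdep
  obtain ⟨t, c, hc, N, hN, hcN⟩ := hdep
  have hmem : ∑ l ∈ t, c l • v l ∈ S := by
    rw [← Submodule.Quotient.mk_eq_zero, ← Submodule.mkQ_apply, map_sum, ← hc]
    simp only [map_smul]
  obtain ⟨w, hw⟩ := Submodule.mem_comap.1 hmem
  have hw' : (M.d ^ (p - s)) w = ∑ l ∈ t, c l • a ^ l • z := by
    rw [← dk_pow_apply, hw]
    simp [v]
  have key : M.proj (j - N) ((M.d ^ (p - s)) w) = c N • a ^ N • z := by
    rw [hw', map_sum, Finset.sum_eq_single_of_mem N hN]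
    · rw [map_smul, M.proj_of_mem (M.X_pow_smul_mem i N hz)]
    · intro l _ hl
      rw [map_smul, M.proj_of_mem_ne (M.X_pow_smul_mem i l hz) (by simpa using hl), smul_zero]
  refine ⟨N, algebraMap k (PolyA n k) (c N)⁻¹ • M.proj (j - N + (p - s : ℕ)) w, ?_⟩
  rw [map_smul, d_pow_proj, add_sub_cancel_right, key, algebraMap_smul, inv_smul_smul₀ hcN]

theorem isPowTorsionHomology_bot (i : Fin n) {s : ℕ} (hfin : FiniteDimensional k (M.H s)) :
    IsPowTorsionHomology (MvPolynomial.X i : PolyA n k) (M.d ^ s) (M.d ^ (p - s)) ⊥ := by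
  intro x hx
  rw [Submodule.bot_smul, Submodule.mem_bot] at hx
  rw [Submodule.bot_smul, sup_bot_eq]
  set a : PolyA n k := MvPolynomial.X i
  have mono : ∀ {N N' : ℕ} {y : M.X}, N ≤ N' → a ^ N • y ∈ LinearMap.range (M.d ^ (p - s)) →
      a ^ N' • y ∈ LinearMap.range (M.d ^ (p - s)) := by
    intro N N' y h hy
    rw [← Nat.sub_add_cancel h, pow_add, mul_smul]
    exact Submodule.smul_mem _ _ hy
  let S : Submodule k M.X :=
    { carrier := {y | ∃ N : ℕ, a ^ N • y ∈ LinearMap.range (M.d ^ (p - s))}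
      zero_mem' := ⟨0, by simp⟩
      add_mem' := by
        rintro y z ⟨N, hN⟩ ⟨N', hN'⟩
        refine ⟨max N N', ?_⟩
        rw [smul_add]
        exact Submodule.add_mem _ (mono (le_max_left _ _) hN) (mono (le_max_right _ _) hN')
      smul_mem' := by
        rintro c y ⟨N, hN⟩
        refine ⟨N, ?_⟩
        rw [← algebraMap_smul (PolyA n k) c y, smul_comm]
        exact Submodule.smul_mem _ _ hN }
  refine M.mem_of_forall_proj_mem S fun j => ?_
  exact M.exists_X_pow_smul_mem_range_of_mem_gr i hfin (M.proj_mem j x)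
    (by rw [d_pow_proj, hx, map_zero])

end PDG

theorem MvPolynomial.isMaximal_span_range_X (n : ℕ) (k : Type) [Field k] :
    (Ideal.span (Set.range (MvPolynomial.X : Fin n → MvPolynomial (Fin n) k))).IsMaximal := by
  have h : Ideal.span (Set.range (MvPolynomial.X : Fin n → MvPolynomial (Fin n) k)) =
      RingHom.ker (MvPolynomial.constantCoeff (σ := Fin n) (R := k)) := by
    rw [← Set.image_univ]
    ext f
    rw [MvPolynomial.mem_ideal_span_X_image, RingHom.mem_ker, MvPolynomial.constantCoeff_eq,
      ← MvPolynomial.notMem_support_iff]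
    constructor
    · intro h h0
      obtain ⟨i, -, hi⟩ := h 0 h0
      exact hi rfl
    · intro h m hm
      by_contra! hm'
      refine h ?_
      have : m = 0 := Finsupp.ext fun i => hm' i trivial
      rwa [← this]
  rw [h]
  exact RingHom.ker_isMaximal_of_surjective _ fun c => ⟨MvPolynomial.C c, by simp⟩

theorem stmt_12 (p n : ℕ) (hp : p.Prime) (k : Type) [Field k] [CharP k p]
    (M : PDG p n k) (hfree : M.IsFreeFG)
    (m : Ideal (PolyA n k)) (hmax : m.IsMaximal)
    (hne : m ≠ Ideal.span (Set.range (MvPolynomial.X : Fin n → PolyA n k)))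
    (hfin : ∀ s : ℕ, 1 ≤ s → s ≤ p - 1 → FiniteDimensional k (M.H s)) :
    ∀ s : ℕ, 1 ≤ s → s ≤ p - 1 →
      ∀ x : M.X, (M.d ^ s) x ∈ m • (⊤ : Submodule (PolyA n k) M.X) →
        x ∈ LinearMap.range (M.d ^ (p - s)) ⊔ m • (⊤ : Submodule (PolyA n k) M.X) := by
  intro s hs1 hsp x hx
  obtain ⟨i, hi⟩ : ∃ i : Fin n, (MvPolynomial.X i : PolyA n k) ∉ m := by
    by_contra! hX
    refine hne ((MvPolynomial.isMaximal_span_range_X n k).eq_of_le hmax.ne_top ?_).symm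
    rw [Ideal.span_le]
    rintro _ ⟨i, rfl⟩
    exact hX i
  obtain ⟨ι, _, _, b, _⟩ := hfree
  have hs : p - (p - s) = s := by omega
  have h₁₂ := M.isPowTorsionHomology_bot i (hfin s hs1 hsp)
  have h₂₁ := M.isPowTorsionHomology_bot i (hfin (p - s) (by omega) (by omega))
  rw [hs] at h₂₁
  have hd₁₂ : ∀ x, (M.d ^ s) ((M.d ^ (p - s)) x) = 0 := fun x => by
    rw [← Module.End.mul_apply, ← pow_add, show s + (p - s) = p by omega, M.d_pow]; rfl
  have hd₂₁ : ∀ x, (M.d ^ (p - s)) ((M.d ^ s) x) = 0 := fun x => by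
    rw [← Module.End.mul_apply, ← pow_add, show p - s + s = p by omega, M.d_pow]; rfl
  obtain ⟨N, hN⟩ := (IsPowTorsionHomology.of_isRegularlyGenerated b hd₁₂ hd₂₁ h₁₂ h₂₁
    (IsRegularlyGenerated.mvPolynomial_of_isMaximal n m hmax)).1 x hx
  obtain ⟨h, hh⟩ := hmax.exists_inv (mt (hmax.isPrime.mem_of_pow_mem N) hi)
  obtain ⟨c, hc, hc1⟩ := hh
  rw [← one_smul (PolyA n k) x, ← hc1, add_smul, mul_smul]
  exact Submodule.add_mem _ (Submodule.smul_mem _ _ hN)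
    (Submodule.mem_sup_right (Submodule.smul_mem_smul hc trivial))
end

section
/- Let p be a prime, k a field of characteristic p, G = (ℤ/p)^n, and C a chain complex of k[G]-modules. For each 1 ≤ s ≤ p−1 the homology of the p-complex ιC is given by {}_sH_{pi−1}(ιC) = H_{2i−1}(C) and {}_sH_{pi−1+s}(ιC) = H_{2i}(C) for all i ∈ ℤ, and {}_sH_l(ιC) = 0 in all remaining degrees l. Moreover the maps i_* give isomorphisms {}_1H_l(ιC) ≅ {}_2H_l(ιC) ≅ ⋯ ≅ {}_{p−1}H_l(ιC) whenever l ≡ p−1 (mod p), and the maps d_* give isomorphisms {}_{p−1}H_l(ιC) ≅ ⋯ ≅ {}_2H_{l−p+3}(ιC) ≅ {}_1H_{l−p+2}(ιC) whenever l ≡ p−2 (mod p). -/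
/-- The degree function of `ι`: `(ιC)_j = C_{iotaDeg p j}`, i.e. `r(pi-1) = 2i-1` and
`r(j) = 2i` for `pi ≤ j ≤ pi+p-2`. -/
def iotaDeg (p : ℕ) (j : ℤ) : ℤ :=
  2 * (j / p) + if j % p = (p : ℤ) - 1 then 1 else 0

section
variable {p n N : ℕ} {k : Type} [Field k]

/-- `s`-cycles of a graded `N`-complex in degree `l`. -/
noncomputable def cycW (W : KGCx p n k N) (s : ℕ) (l : ℤ) : Submodule (GroupRing p n k) W.X :=
  LinearMap.ker (W.d ^ s) ⊓ W.gr l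

/-- `s`-boundaries of a graded `N`-complex in degree `l`: `d^{N-s}(W_{l+N-s})`. -/
noncomputable def bdW (W : KGCx p n k N) (s : ℕ) (l : ℤ) : Submodule (GroupRing p n k) W.X :=
  (W.gr (l + ((N - s : ℕ) : ℤ))).map (W.d ^ (N - s))

end

/-- The degree `p * i - 1 + t` with `1 ≤ t ≤ p` has quotient `i` and remainder `t - 1`
modulo `p`. -/
lemma iota_ediv_emod {p : ℕ} {i t : ℤ} (ht : 1 ≤ t) (htp : t ≤ p) :
    (p * i - 1 + t) / p = i ∧ (p * i - 1 + t) % p = t - 1 :=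
  (Int.ediv_emod_unique (by omega)).2 ⟨by ring, by omega, by omega⟩

lemma iotaDeg_even {p : ℕ} {i t : ℤ} (ht : 1 ≤ t) (htp : t < p) :
    iotaDeg p (p * i - 1 + t) = 2 * i := by
  obtain ⟨h₁, h₂⟩ := iota_ediv_emod (i := i) ht htp.le
  rw [iotaDeg, h₁, h₂, if_neg (by omega), add_zero]

lemma iota_ediv_emod_odd {p : ℕ} (hp : 1 ≤ p) (i : ℤ) :
    (p * i - 1) / p = i - 1 ∧ (p * i - 1) % p = (p : ℤ) - 1 :=
  (Int.ediv_emod_unique (by omega)).2 ⟨by ring, by omega, by omega⟩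

lemma iotaDeg_odd {p : ℕ} (hp : 1 ≤ p) (i : ℤ) : iotaDeg p (p * i - 1) = 2 * i - 1 := by
  obtain ⟨h₁, h₂⟩ := iota_ediv_emod_odd hp i
  rw [iotaDeg, h₁, h₂, if_pos rfl]
  ring

/-- The maps `ψ j` exhibit the `p`-complex `W` as `ιC`. -/
structure IsIota {p n : ℕ} {k : Type} [Field k] (C : KGCx p n k 2) (W : KGCx p n k p)
    (ψ : ℤ → (C.X →ₗ[GroupRing p n k] W.X)) : Prop where
  two_le : 2 ≤ p
  map_gr : ∀ j : ℤ, (C.gr (iotaDeg p j)).map (ψ j) = W.gr j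
  inj : ∀ j : ℤ, ∀ x ∈ C.gr (iotaDeg p j), ψ j x = 0 → x = 0
  comm_d : ∀ j : ℤ, ∀ x ∈ C.gr (iotaDeg p j),
    W.d (ψ j x) = if j % p = 0 ∨ j % p = (p : ℤ) - 1 then ψ (j - 1) (C.d x) else ψ (j - 1) x

namespace KGCx

variable {p n : ℕ} {k : Type} [Field k] (C : KGCx p n k 2)

lemma d_mem_gr {m m' : ℤ} {x : C.X} (hx : x ∈ C.gr m) (hm : m - 1 = m') : C.d x ∈ C.gr m' :=
  hm ▸ C.d_deg m x hx

end KGCx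

namespace IsIota

variable {p n : ℕ} {k : Type} [Field k] {C : KGCx p n k 2} {W : KGCx p n k p}
  {ψ : ℤ → (C.X →ₗ[GroupRing p n k] W.X)} {i : ℤ} {s t : ℕ}

lemma gr_even (h : IsIota C W ψ) (ht : 1 ≤ t) (htp : t < p) :
    W.gr (p * i - 1 + t) = (C.gr (2 * i)).map (ψ (p * i - 1 + t)) := by
  rw [← h.map_gr, iotaDeg_even (by omega) (by omega)]

lemma gr_odd (h : IsIota C W ψ) :
    W.gr (p * i - 1) = (C.gr (2 * i - 1)).map (ψ (p * i - 1)) := by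
  have := h.two_le
  rw [← h.map_gr, iotaDeg_odd (by omega)]

lemma inj_even (h : IsIota C W ψ) (ht : 1 ≤ t) (htp : t < p) {x : C.X} (hx : x ∈ C.gr (2 * i))
    (h0 : ψ (p * i - 1 + t) x = 0) : x = 0 :=
  h.inj _ x (by rwa [iotaDeg_even (by omega) (by omega)]) h0

lemma inj_odd (h : IsIota C W ψ) {x : C.X} (hx : x ∈ C.gr (2 * i - 1))
    (h0 : ψ (p * i - 1) x = 0) : x = 0 :=
  h.inj _ x (by rwa [iotaDeg_odd (by have := h.two_le; omega)]) h0

lemma d_even (h : IsIota C W ψ) (ht : 1 ≤ t) (htp : t + 1 < p) {x : C.X}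
    (hx : x ∈ C.gr (2 * i)) :
    W.d (ψ (p * i - 1 + (t + 1 : ℕ)) x) = ψ (p * i - 1 + t) x := by
  rw [h.comm_d _ x (by rwa [iotaDeg_even (by omega) (by omega)]),
    (iota_ediv_emod (by omega) (by omega)).2, if_neg (by omega)]
  congr 2
  push_cast
  ring

lemma d_even_bottom (h : IsIota C W ψ) {x : C.X} (hx : x ∈ C.gr (2 * i)) :
    W.d (ψ (p * i - 1 + (1 : ℕ)) x) = ψ (p * i - 1) (C.d x) := by
  have := h.two_le
  rw [h.comm_d _ x (by rwa [iotaDeg_even (by omega) (by omega)]),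
    (iota_ediv_emod (by omega) (by omega)).2, if_pos (by simp)]
  congr 2
  push_cast
  ring

lemma d_odd (h : IsIota C W ψ) {x : C.X} (hx : x ∈ C.gr (2 * i - 1)) :
    W.d (ψ (p * i - 1) x) = ψ (p * (i - 1) - 1 + (p - 1 : ℕ)) (C.d x) := by
  have := h.two_le
  rw [h.comm_d _ x (by rwa [iotaDeg_odd (by omega)]), (iota_ediv_emod_odd (by omega) i).2,
    if_pos (Or.inr rfl)]
  congr 2
  push_cast [Nat.cast_sub (show 1 ≤ p by omega)]
  ring

lemma d_pow_even (h : IsIota C W ψ) (ht : 1 ≤ t) (hst : t + s < p) {x : C.X}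
    (hx : x ∈ C.gr (2 * i)) :
    (W.d ^ s) (ψ (p * i - 1 + (t + s : ℕ)) x) = ψ (p * i - 1 + t) x := by
  induction s with
  | zero => simp
  | succ s ih =>
    rw [pow_succ, Module.End.mul_apply, ← add_assoc, h.d_even (by omega) (by omega) hx,
      ih (by omega)]

lemma d_pow_even_eq (h : IsIota C W ψ) (ht : 1 ≤ t) (htp : t < p) {x : C.X}
    (hx : x ∈ C.gr (2 * i)) :
    (W.d ^ t) (ψ (p * i - 1 + t) x) = ψ (p * i - 1) (C.d x) := by
  obtain ⟨t, rfl⟩ := Nat.exists_eq_add_of_le ht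
  rw [pow_add, pow_one, Module.End.mul_apply, h.d_pow_even le_rfl htp hx, h.d_even_bottom hx]

lemma d_pow_odd (h : IsIota C W ψ) (hs : 1 ≤ s) (hsp : t + s = p) (ht : 1 ≤ t) {x : C.X}
    (hx : x ∈ C.gr (2 * i - 1)) :
    (W.d ^ s) (ψ (p * i - 1) x) = ψ (p * (i - 1) - 1 + t) (C.d x) := by
  obtain ⟨s, rfl⟩ := Nat.exists_eq_add_of_le' hs
  rw [pow_succ, Module.End.mul_apply, h.d_odd hx, show p - 1 = t + s by omega,
    h.d_pow_even ht (by omega) (C.d_mem_gr hx (by ring))]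

lemma mem_cycW_odd (h : IsIota C W ψ) (hs : 1 ≤ s) (hsp : s < p) {w : W.X} :
    w ∈ cycW W s (p * i - 1) ↔
      ∃ x ∈ LinearMap.ker C.d ⊓ C.gr (2 * i - 1), ψ (p * i - 1) x = w := by
  rw [cycW, h.gr_odd]
  have key : ∀ x ∈ C.gr (2 * i - 1), (W.d ^ s) (ψ (p * i - 1) x) =
      ψ (p * (i - 1) - 1 + (p - s : ℕ)) (C.d x) := fun x hx =>
    h.d_pow_odd hs (by omega) (by omega) hx
  constructor
  · rintro ⟨hw, x, hx, rfl⟩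
    refine ⟨x, ⟨?_, hx⟩, rfl⟩
    refine h.inj_even (i := i - 1) (t := p - s) (by omega) (by omega)
      (C.d_mem_gr hx (by ring)) ?_
    rw [← key x hx]
    exact hw
  · rintro ⟨x, ⟨hd, hx⟩, rfl⟩
    refine ⟨?_, x, hx, rfl⟩
    rw [SetLike.mem_coe, LinearMap.mem_ker] at hd ⊢
    rw [key x hx, hd, map_zero]

lemma mem_bdW_odd (h : IsIota C W ψ) (hs : 1 ≤ s) (hsp : s < p) {w : W.X} :
    w ∈ bdW W s (p * i - 1) ↔ ∃ y ∈ C.gr (2 * i), ψ (p * i - 1) (C.d y) = w := by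
  rw [bdW, h.gr_even (by omega) (by omega), Submodule.mem_map]
  constructor
  · rintro ⟨_, ⟨y, hy, rfl⟩, rfl⟩
    exact ⟨y, hy, (h.d_pow_even_eq (by omega) (by omega) hy).symm⟩
  · rintro ⟨y, hy, rfl⟩
    exact ⟨_, ⟨y, hy, rfl⟩, h.d_pow_even_eq (by omega) (by omega) hy⟩

lemma mem_cycW_even (h : IsIota C W ψ) (hs : 1 ≤ s) (hsp : s < p) {w : W.X} :
    w ∈ cycW W s (p * i - 1 + s) ↔
      ∃ x ∈ LinearMap.ker C.d ⊓ C.gr (2 * i), ψ (p * i - 1 + s) x = w := by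
  rw [cycW, h.gr_even hs hsp]
  constructor
  · rintro ⟨hw, x, hx, rfl⟩
    refine ⟨x, ⟨h.inj_odd (C.d_mem_gr hx rfl) ?_, hx⟩, rfl⟩
    rw [← h.d_pow_even_eq hs hsp hx]
    exact hw
  · rintro ⟨x, ⟨hd, hx⟩, rfl⟩
    refine ⟨?_, x, hx, rfl⟩
    rw [SetLike.mem_coe, LinearMap.mem_ker] at hd ⊢
    rw [h.d_pow_even_eq hs hsp hx, hd, map_zero]

lemma mem_bdW_even (h : IsIota C W ψ) (hs : 1 ≤ s) (hsp : s < p) {w : W.X} :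
    w ∈ bdW W s (p * i - 1 + s) ↔
      ∃ y ∈ C.gr (2 * i + 1), ψ (p * i - 1 + s) (C.d y) = w := by
  have hdeg : (p * i - 1 + s + (p - s : ℕ) : ℤ) = p * (i + 1) - 1 := by
    push_cast [Nat.cast_sub hsp.le]
    ring
  have key : ∀ y ∈ C.gr (2 * (i + 1) - 1), (W.d ^ (p - s)) (ψ (p * (i + 1) - 1) y) =
      ψ (p * i - 1 + s) (C.d y) := fun y hy => by
    rw [h.d_pow_odd (t := s) (by omega) (by omega) hs hy, add_sub_cancel_right]
  rw [bdW, hdeg, h.gr_odd, Submodule.mem_map, show 2 * i + 1 = 2 * (i + 1) - 1 by ring]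
  constructor
  · rintro ⟨_, ⟨y, hy, rfl⟩, rfl⟩
    exact ⟨y, hy, (key y hy).symm⟩
  · rintro ⟨y, hy, rfl⟩
    exact ⟨_, ⟨y, hy, rfl⟩, key y hy⟩

lemma cycW_eq_bot (h : IsIota C W ψ) (hst : s < t) (htp : t < p) :
    cycW W s (p * i - 1 + t) = ⊥ := by
  rw [eq_bot_iff, cycW, h.gr_even (by omega) htp]
  rintro _ ⟨hw, x, hx, rfl⟩
  obtain ⟨u, rfl⟩ := Nat.exists_eq_add_of_le' hst.le
  rw [SetLike.mem_coe, LinearMap.mem_ker, h.d_pow_even (by omega) htp hx] at hw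
  rw [h.inj_even (by omega) (by omega) hx hw, map_zero]
  exact zero_mem _

lemma bdW_eq_gr (h : IsIota C W ψ) (ht : 1 ≤ t) (hts : t < s) (hsp : s < p) :
    bdW W s (p * i - 1 + t) = W.gr (p * i - 1 + t) := by
  have hdeg : (p * i - 1 + t + (p - s : ℕ) : ℤ) = p * i - 1 + (t + (p - s) : ℕ) := by
    push_cast
    ring
  rw [bdW, hdeg, h.gr_even (by omega) (by omega), h.gr_even ht (by omega)]
  ext w
  constructor
  · rintro ⟨_, ⟨x, hx, rfl⟩, rfl⟩
    exact ⟨x, hx, (h.d_pow_even ht (by omega) hx).symm⟩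
  · rintro ⟨x, hx, rfl⟩
    exact ⟨_, ⟨x, hx, rfl⟩, h.d_pow_even ht (by omega) hx⟩

lemma cycW_le_bdW (h : IsIota C W ψ) (hsp : s < p) {l : ℤ}
    (hl : ∀ i : ℤ, l ≠ p * i - 1 ∧ l ≠ p * i - 1 + s) : cycW W s l ≤ bdW W s l := by
  have hp : (0 : ℤ) < p := by have := h.two_le; omega
  obtain ⟨i, t, htp, rfl⟩ : ∃ (i : ℤ) (t : ℕ), t < p ∧ l = p * i - 1 + t := by
    obtain ⟨t, ht⟩ := Int.eq_ofNat_of_zero_le (Int.emod_nonneg (l + 1) hp.ne')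
    have htp := Int.emod_lt_of_pos (l + 1) hp
    have hdiv := Int.mul_ediv_add_emod (l + 1) p
    exact ⟨(l + 1) / p, t, by omega, by omega⟩
  obtain ⟨ht, hts⟩ := hl i
  rcases lt_or_gt_of_ne (show t ≠ s by omega) with hlt | hgt
  · rw [h.bdW_eq_gr (by omega) hlt hsp]
    exact inf_le_right
  · rw [h.cycW_eq_bot hgt htp]
    exact bot_le

lemma d_injective (h : IsIota C W ψ) (hs : 2 ≤ s) (hsp : s < p) {w : W.X}
    (hw : w ∈ cycW W s (p * i - 1 + s))
    (hd : W.d w ∈ bdW W (s - 1) (p * i - 1 + (s - 1 : ℕ))) :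
    w ∈ bdW W s (p * i - 1 + s) := by
  obtain ⟨x, ⟨-, hx⟩, rfl⟩ := (h.mem_cycW_even (by omega) hsp).1 hw
  obtain ⟨y, hy, hyx⟩ := (h.mem_bdW_even (by omega) (by omega)).1 hd
  obtain ⟨u, rfl⟩ := Nat.exists_eq_add_of_le' (show 1 ≤ s by omega)
  rw [h.d_even (by omega) hsp hx, Nat.add_sub_cancel] at hyx
  have hxy := h.inj_even (t := u) (by omega) (by omega) (sub_mem (C.d_mem_gr hy (by ring)) hx)
    (by rw [map_sub, hyx, sub_self])
  exact (h.mem_bdW_even (by omega) hsp).2 ⟨y, hy, by rw [sub_eq_zero.1 hxy]⟩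

lemma d_surjective (h : IsIota C W ψ) (hs : 2 ≤ s) (hsp : s < p) {w : W.X}
    (hw : w ∈ cycW W (s - 1) (p * i - 1 + (s - 1 : ℕ))) :
    ∃ x ∈ cycW W s (p * i - 1 + s), W.d x = w := by
  obtain ⟨x, hx, rfl⟩ := (h.mem_cycW_even (by omega) (by omega)).1 hw
  obtain ⟨u, rfl⟩ := Nat.exists_eq_add_of_le' (show 1 ≤ s by omega)
  exact ⟨_, (h.mem_cycW_even (by omega) hsp).2 ⟨x, hx, rfl⟩,
    h.d_even (by omega) hsp hx.2⟩

end IsIota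

theorem stmt_13 (p n : ℕ) (hp : p.Prime) (k : Type) [Field k] [CharP k p]
    -- a chain complex `C` of `k[G]`-modules:
    (C : KGCx p n k 2)
    -- the `p`-complex `W = ιC`:
    (W : KGCx p n k p)
    -- the structure maps `ψ j` identifying `C_{r j}` with `W_j`:
    (ψ : ℤ → (C.X →ₗ[GroupRing p n k] W.X))
    (hψsurj : ∀ j : ℤ, (C.gr (iotaDeg p j)).map (ψ j) = W.gr j)
    (hψinj : ∀ j : ℤ, ∀ x ∈ C.gr (iotaDeg p j), ψ j x = 0 → x = 0)
    (hψd : ∀ j : ℤ, ∀ x ∈ C.gr (iotaDeg p j),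
      W.d (ψ j x) =
        if j % p = 0 ∨ j % p = (p : ℤ) - 1 then ψ (j - 1) (C.d x) else ψ (j - 1) x) :
    -- the homology identifications, for each `1 ≤ s ≤ p-1`:
    (∀ s : ℕ, 1 ≤ s → s ≤ p - 1 →
      -- `ₛH_{pi-1}(ιC) = H_{2i-1}(C)` and `ₛH_{pi-1+s}(ιC) = H_{2i}(C)`, via `ψ`:
      (∀ i : ℤ,
        (∀ x ∈ LinearMap.ker C.d ⊓ C.gr (2 * i - 1),
          ψ (p * i - 1) x ∈ bdW W s (p * i - 1) → x ∈ (C.gr (2 * i)).map C.d) ∧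
        (∀ w ∈ cycW W s (p * i - 1),
          ∃ x ∈ LinearMap.ker C.d ⊓ C.gr (2 * i - 1),
            w - ψ (p * i - 1) x ∈ bdW W s (p * i - 1)) ∧
        (∀ x ∈ LinearMap.ker C.d ⊓ C.gr (2 * i),
          ψ (p * i - 1 + s) x ∈ bdW W s (p * i - 1 + s) →
            x ∈ (C.gr (2 * i + 1)).map C.d) ∧
        (∀ w ∈ cycW W s (p * i - 1 + s),
          ∃ x ∈ LinearMap.ker C.d ⊓ C.gr (2 * i),
            w - ψ (p * i - 1 + s) x ∈ bdW W s (p * i - 1 + s))) ∧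
      -- `ₛH_l(ιC) = 0` in all remaining degrees:
      (∀ l : ℤ, (∀ i : ℤ, l ≠ p * i - 1 ∧ l ≠ p * i - 1 + s) →
        cycW W s l ≤ bdW W s l)) ∧
    -- `i_* : ₛH_l ≅ ₛ₊₁H_l` for `l ≡ p-1 (mod p)` and `1 ≤ s ≤ p-2`:
    (∀ s : ℕ, 1 ≤ s → s ≤ p - 2 → ∀ l : ℤ, (∃ i : ℤ, l = p * i - 1) →
      (∀ x ∈ cycW W s l, x ∈ bdW W (s + 1) l → x ∈ bdW W s l) ∧
      (∀ x ∈ cycW W (s + 1) l, ∃ y ∈ cycW W s l, x - y ∈ bdW W (s + 1) l)) ∧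
    -- `d_* : ₛH_m ≅ ₛ₋₁H_{m-1}` (with `m = l - (p-1-s)`) for `l ≡ p-2 (mod p)` and
    -- `2 ≤ s ≤ p-1`:
    (∀ s : ℕ, 2 ≤ s → s ≤ p - 1 → ∀ l : ℤ, (∃ i : ℤ, l = p * i - 2) →
      (∀ x ∈ cycW W s (l - ((p - 1 - s : ℕ) : ℤ)),
        W.d x ∈ bdW W (s - 1) (l - ((p - 1 - s : ℕ) : ℤ) - 1) →
          x ∈ bdW W s (l - ((p - 1 - s : ℕ) : ℤ))) ∧
      (∀ w ∈ cycW W (s - 1) (l - ((p - 1 - s : ℕ) : ℤ) - 1),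
        ∃ x ∈ cycW W s (l - ((p - 1 - s : ℕ) : ℤ)),
          w - W.d x ∈ bdW W (s - 1) (l - ((p - 1 - s : ℕ) : ℤ) - 1))) := by
  have h : IsIota C W ψ := ⟨hp.two_le, hψsurj, hψinj, hψd⟩
  have hp2 := hp.two_le
  refine ⟨fun s hs hsp => ⟨fun i => ⟨?_, ?_, ?_, ?_⟩, fun l hl => ?_⟩, ?_, ?_⟩
  · rintro x ⟨-, hx⟩ hb
    obtain ⟨y, hy, hyx⟩ := (h.mem_bdW_odd hs (by omega)).1 hb
    have hxy := h.inj_odd (sub_mem (C.d_mem_gr hy rfl) hx) (by rw [map_sub, hyx, sub_self])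
    exact ⟨y, hy, sub_eq_zero.1 hxy⟩
  · intro w hw
    obtain ⟨x, hx, rfl⟩ := (h.mem_cycW_odd hs (by omega)).1 hw
    exact ⟨x, hx, by rw [sub_self]; exact zero_mem _⟩
  · rintro x ⟨-, hx⟩ hb
    obtain ⟨y, hy, hyx⟩ := (h.mem_bdW_even hs (by omega)).1 hb
    have hxy := h.inj_even hs (by omega) (sub_mem (C.d_mem_gr hy (by ring)) hx)
      (by rw [map_sub, hyx, sub_self])
    exact ⟨y, hy, sub_eq_zero.1 hxy⟩
  · intro w hw
    obtain ⟨x, hx, rfl⟩ := (h.mem_cycW_even hs (by omega)).1 hw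
    exact ⟨x, hx, by rw [sub_self]; exact zero_mem _⟩
  · exact h.cycW_le_bdW (by omega) hl
  · rintro s hs hsp l ⟨i, rfl⟩
    refine ⟨fun x _ hx => ?_, fun x hx => ⟨x, ?_, by rw [sub_self]; exact zero_mem _⟩⟩
    · exact (h.mem_bdW_odd hs (by omega)).2 ((h.mem_bdW_odd (by omega) (by omega)).1 hx)
    · exact (h.mem_cycW_odd hs (by omega)).2 ((h.mem_cycW_odd (by omega) (by omega)).1 hx)
  · rintro s hs hsp l ⟨i, rfl⟩
    have hm : (p * i - 2 - (p - 1 - s : ℕ) : ℤ) = p * (i - 1) - 1 + s := by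
      rw [mul_sub]
      omega
    have hm' : (p * (i - 1) - 1 + s - 1 : ℤ) = p * (i - 1) - 1 + (s - 1 : ℕ) := by omega
    rw [hm, hm']
    refine ⟨fun x hx hd => h.d_injective hs (by omega) hx hd, fun w hw => ?_⟩
    obtain ⟨x, hx, rfl⟩ := h.d_surjective hs (by omega) hw
    exact ⟨x, hx, by rw [sub_self]; exact zero_mem _⟩
end
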